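/- For every fixed point (i,j) ∈ ℕ², the sequence n ↦ g(n;i,j) is P-finite: there exist r ≥ 1 and polynomials p₀, …, p_r ∈ ℚ[n] with p_r ≠ 0 such that Σ_{k=0}^{r} p_k(n)·g(n+k;i,j) = 0 for all n ∈ ℕ. -/

import Mathlib

/-!
# Gessel walks with a fixed endpoint are counted by a P-finite sequence

Write `Q_{i,j}(t) = ∑ₙ g(n;i,j) tⁿ` and `Q(x,y) = ∑ Q_{i,j}(t) xⁱ yʲ`. Every `Q_{i,j}` is algebraic
over `ℚ[t]` (`ptSeries_mem`), and the coefficients of an algebraic power series form a P-finite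
sequence (`pfinite_of_algebraic`).

*Algebraicity.* The argument uses invariants of the kernel, in the manner of Tutte. Removing the
last step of a walk yields `xy(1 - tS) Q(x,y) = xy - t(Q(x,0) - Q(0,0)) - t(1+y) Q(0,y)`, with
`S = x + x⁻¹ + xy + (xy)⁻¹`. On the curve `1 = tS` two pairs of functions agree, the first member
depending on `x` only and the second on `y` only: the rational pair
`I₀ = (x + x⁻¹)/t - (x + x⁻¹)²`, `J₀ = (1+y)²/y + y/(t²(1+y)²) - 4`, and, by the functional equation,
the pair given by `x I₁ = 1 + t x (Q(x,0) - Q(0,0))` and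
`t(1+y) J₁ = y - t²(1+y)² Q(0,y)`. The invariants have poles at `x = 0`, which are cancelled in
`I₀ (I₁ - c) - P(I₁)` for a suitable constant `c` and a suitable cubic polynomial `P`, whose
coefficients involve `Q_{0,0}`, `Q_{1,0}` and `Q_{2,0}`. A pair without poles that vanishes at
`x = 0` must be zero (`invariant_lemma`): otherwise it would be divisible by arbitrarily high powers
of `t`. So `Q(x,0)` and `Q(0,y)` satisfy cubic equations (`cubic_equations`) in which only the three
parameters are unknown.

To determine them, differentiate the cubics at `x = 1`, `x = -1` and `y = 1`, where `I₀` and `J₀` are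
critical. Each point gives a double root of a cubic polynomial. After the substitution
`U = 2t(Z - c)` the three double roots are the three roots of one polynomial `U³ - s U² - p`
(`double_roots_vieta`), and the known critical values make power sums of these roots known; the
elimination in `cubic_resolvent` leaves a nonzero polynomial equation for `s` over `ℚ[t]`. Hence
the parameters are algebraic (`params_mem_algSeries`), the cubics determine the coefficients of
`Q(x,0)` and `Q(0,y)` recursively and so these are algebraic, and the step recurrence carries
algebraicity from the axes to all points of the quadrant.

*P-finiteness.* If `f` is algebraic over `ℚ[t]`, the field `ℚ(t)(f)` is finite over `ℚ(t)` and
stable under `θ = t d/dt`: apply `θ` to an algebraic relation of minimal degree. So the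
`θᵏ f` are linearly dependent over `ℚ[t]` (`exists_linear_relation`), and because `θ` multiplies the
`n`-th coefficient by `n`, comparing coefficients gives the recurrence.
-/

noncomputable section

/-- The set of admissible steps for Gessel walks. -/
def gesselSteps : Set (ℤ × ℤ) := {(1, 0), (-1, 0), (1, 1), (-1, -1)}

/-- The position of the walk `w` after its first `k` steps. -/
def walkPos {n : ℕ} (w : Fin n → ℤ × ℤ) (k : ℕ) : ℤ × ℤ :=
  ∑ m ∈ Finset.univ.filter (fun m : Fin n => (m : ℕ) < k), w m

/-- `w` is a Gessel walk: every step is admissible and the walk (which starts at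
the origin) never leaves the first quadrant. -/
def IsGesselWalk {n : ℕ} (w : Fin n → ℤ × ℤ) : Prop :=
  (∀ m, w m ∈ gesselSteps) ∧ ∀ k ≤ n, 0 ≤ (walkPos w k).1 ∧ 0 ≤ (walkPos w k).2

/-- The number of Gessel walks of length `n` ending at `(i, j)`. -/
def g (n : ℕ) (i j : ℤ) : ℕ :=
  Nat.card {w : Fin n → ℤ × ℤ // IsGesselWalk w ∧ walkPos w n = (i, j)}

/-! ### The step recurrence -/

lemma walkPos_snoc_of_le {n : ℕ} (w : Fin n → ℤ × ℤ) (s : ℤ × ℤ) {k : ℕ} (hk : k ≤ n) :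
    walkPos (Fin.snoc w s : Fin (n + 1) → ℤ × ℤ) k = walkPos w k := by
  unfold walkPos
  rw [Finset.sum_filter, Finset.sum_filter, Fin.sum_univ_castSucc]
  simp [not_lt.mpr hk]

lemma walkPos_snoc_last {n : ℕ} (w : Fin n → ℤ × ℤ) (s : ℤ × ℤ) :
    walkPos (Fin.snoc w s : Fin (n + 1) → ℤ × ℤ) (n + 1) = walkPos w n + s := by
  unfold walkPos
  rw [Finset.sum_filter, Finset.sum_filter, Fin.sum_univ_castSucc]
  simp

lemma isGesselWalk_snoc {n : ℕ} (w : Fin n → ℤ × ℤ) (s : ℤ × ℤ) :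
    IsGesselWalk (Fin.snoc w s : Fin (n + 1) → ℤ × ℤ) ↔
      IsGesselWalk w ∧ s ∈ gesselSteps ∧
        0 ≤ (walkPos w n + s).1 ∧ 0 ≤ (walkPos w n + s).2 := by
  constructor
  · rintro ⟨h1, h2⟩
    refine ⟨⟨fun m => by simpa using h1 m.castSucc, fun k hk => ?_⟩,
      by simpa using h1 (Fin.last n), ?_⟩
    · simpa [walkPos_snoc_of_le w s hk] using h2 k (by omega)
    · simpa [walkPos_snoc_last] using h2 (n + 1) le_rfl
  · rintro ⟨⟨h1, h2⟩, h3, h4⟩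
    refine ⟨fun m => ?_, fun k hk => ?_⟩
    · refine Fin.lastCases ?_ (fun m => ?_) m
      · simpa using h3
      · simpa using h1 m
    · rcases Nat.lt_or_ge n k with h | h
      · obtain rfl : k = n + 1 := by omega
        simpa [walkPos_snoc_last] using h4
      · simpa [walkPos_snoc_of_le w s h] using h2 k h

lemma gesselSteps_finite : gesselSteps.Finite := by
  unfold gesselSteps
  exact Set.toFinite _

/-- Finiteness is what makes `Nat.card` in the definition of `g` an honest count. -/
instance finite_gesselWalk (n : ℕ) (p : ℤ × ℤ) :
    Finite {w : Fin n → ℤ × ℤ // IsGesselWalk w ∧ walkPos w n = p} := by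
  have h : {w : Fin n → ℤ × ℤ | ∀ m, w m ∈ gesselSteps}.Finite :=
    Set.Finite.pi' fun _ => gesselSteps_finite
  exact (h.subset fun w hw m => hw.1.1 m : {w : Fin n → ℤ × ℤ |
    IsGesselWalk w ∧ walkPos w n = p}.Finite)

lemma g_of_neg {n : ℕ} {i j : ℤ} (h : i < 0 ∨ j < 0) : g n i j = 0 := by
  unfold g
  rw [Nat.card_eq_zero]
  left
  constructor
  rintro ⟨w, hw, he⟩
  have := hw.2 n le_rfl
  rw [he] at this
  simp only at this
  omega

lemma g_zero (i j : ℤ) : g 0 i j = if i = 0 ∧ j = 0 then 1 else 0 := by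
  unfold g
  have hw : ∀ w : Fin 0 → ℤ × ℤ, IsGesselWalk w ∧ walkPos w 0 = (i, j) ↔ i = 0 ∧ j = 0 := by
    intro w
    simp [IsGesselWalk, walkPos, Prod.ext_iff, eq_comm]
  simp only [hw]
  split_ifs with h <;> simp [h]

/-- A walk of length `n + 1` ending at a point of the quadrant is a walk of length `n`
followed by one step. -/
def walkEquiv (n : ℕ) {i j : ℤ} (hi : 0 ≤ i) (hj : 0 ≤ j) :
    {w : Fin (n + 1) → ℤ × ℤ // IsGesselWalk w ∧ walkPos w (n + 1) = (i, j)} ≃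
      Σ s : gesselSteps, {w : Fin n → ℤ × ℤ // IsGesselWalk w ∧
        walkPos w n = (i - s.1.1, j - s.1.2)} where
  toFun w := ⟨⟨w.1 (Fin.last n), w.2.1.1 _⟩, ⟨Fin.init w.1, by
    obtain ⟨w, hw, he⟩ := w
    rw [← Fin.snoc_init_self w, isGesselWalk_snoc] at hw
    refine ⟨hw.1, ?_⟩
    rw [← Fin.snoc_init_self w, walkPos_snoc_last] at he
    rw [eq_sub_of_add_eq he]
    rfl⟩⟩
  invFun p := ⟨Fin.snoc p.2.1 p.1.1, by
    obtain ⟨⟨s, hs⟩, ⟨w, hw, he⟩⟩ := p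
    simp only [isGesselWalk_snoc, walkPos_snoc_last]
    simp only at he
    refine ⟨⟨hw, hs, ?_⟩, ?_⟩ <;> simp [he, hi, hj, Prod.ext_iff]⟩
  left_inv w := by simp
  right_inv p := by
    obtain ⟨⟨s, hs⟩, ⟨w, hw, he⟩⟩ := p
    simp only
    congr! <;> simp

/-- The last-step recurrence for the number of walks. -/
lemma g_succ (n : ℕ) {i j : ℤ} (hi : 0 ≤ i) (hj : 0 ≤ j) :
    g (n + 1) i j = g n (i - 1) j + g n (i + 1) j + g n (i - 1) (j - 1) + g n (i + 1) (j + 1) := by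
  have : Fintype gesselSteps := gesselSteps_finite.fintype
  have key : g (n + 1) i j = ∑ s : gesselSteps, g n (i - s.1.1) (j - s.1.2) := by
    unfold g
    rw [Nat.card_congr (walkEquiv n hi hj), Nat.card_sigma]
  have h2 : ∑ s : gesselSteps, g n (i - s.1.1) (j - s.1.2)
      = ∑ s ∈ ({(1, 0), (-1, 0), (1, 1), (-1, -1)} : Finset (ℤ × ℤ)),
          g n (i - s.1) (j - s.2) := by
    refine (Finset.sum_subtype (p := fun s => s ∈ gesselSteps) _ (fun s => ?_)
      (fun s => g n (i - s.1) (j - s.2))).symm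
    simp [gesselSteps]
  rw [key, h2, Finset.sum_insert (by decide), Finset.sum_insert (by decide),
    Finset.sum_insert (by decide), Finset.sum_singleton]
  simp
  ring

lemma g_of_gt {n : ℕ} {i j : ℤ} (h : (n : ℤ) < i ∨ (n : ℤ) < j) : g n i j = 0 := by
  induction n generalizing i j with
  | zero =>
    rw [g_zero, if_neg]
    push_cast at h
    omega
  | succ n ih =>
    push_cast at h
    by_cases hn : i < 0 ∨ j < 0
    · exact g_of_neg hn
    · rw [g_succ n (by omega) (by omega), ih (by omega), ih (by omega), ih (by omega),
        ih (by omega)]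

/-! ### Generating functions and the functional equation -/

/-- The length generating function `∑ₙ g(n;i,j) tⁿ` for a fixed endpoint. -/
def endSeries (i j : ℕ) : PowerSeries ℚ := PowerSeries.mk fun n => (g n i j : ℚ)

/-- `∑ᵢ Q_{i+s,0}(t) xⁱ`, as a power series in `t` over `ℚ[x]`. -/
def rowTail (s : ℕ) : PowerSeries (Polynomial ℚ) := PowerSeries.mk fun n =>
  ∑ i ∈ Finset.range (n + 1), Polynomial.monomial i (g n (i + s : ℕ) (0 : ℕ) : ℚ)

/-- `∑ⱼ Q_{0,j+s}(t) yʲ`, as a power series in `t` over `ℚ[y]`. -/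
def colTail (s : ℕ) : PowerSeries (Polynomial ℚ) := PowerSeries.mk fun n =>
  ∑ j ∈ Finset.range (n + 1), Polynomial.monomial j (g n (0 : ℕ) (j + s : ℕ) : ℚ)

/-- The complete generating function `Q(x,y;t)`, as a power series in `t` over `ℚ[y][x]`. -/
def fullSeries : PowerSeries (Polynomial (Polynomial ℚ)) := PowerSeries.mk fun n =>
  ∑ i ∈ Finset.range (n + 1), Polynomial.monomial i
    (∑ j ∈ Finset.range (n + 1), Polynomial.monomial j (g n i j : ℚ))

/-- `ℚ⟦t⟧ → ℚ[x]⟦t⟧`. -/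
def constEmb : PowerSeries ℚ →+* PowerSeries (Polynomial ℚ) := PowerSeries.map Polynomial.C

/-- `ℚ[x]⟦t⟧ → ℚ[y][x]⟦t⟧`. -/
def xEmb : PowerSeries (Polynomial ℚ) →+* PowerSeries (Polynomial (Polynomial ℚ)) :=
  PowerSeries.map (Polynomial.mapRingHom Polynomial.C)

/-- `ℚ[y]⟦t⟧ → ℚ[y][x]⟦t⟧`. -/
def yEmb : PowerSeries (Polynomial ℚ) →+* PowerSeries (Polynomial (Polynomial ℚ)) :=
  PowerSeries.map Polynomial.C

lemma coeff_rowTail (s n i : ℕ) :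
    (PowerSeries.coeff n (rowTail s)).coeff i = (g n (i + s : ℕ) (0 : ℕ) : ℚ) := by
  simp only [rowTail, PowerSeries.coeff_mk, Polynomial.finsetSum_coeff,
    Polynomial.coeff_monomial, Finset.sum_ite_eq', Finset.mem_range]
  split_ifs with h
  · rfl
  · rw [g_of_gt (by push_cast; omega), Nat.cast_zero]

lemma coeff_colTail (s n j : ℕ) :
    (PowerSeries.coeff n (colTail s)).coeff j = (g n (0 : ℕ) (j + s : ℕ) : ℚ) := by
  simp only [colTail, PowerSeries.coeff_mk, Polynomial.finsetSum_coeff,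
    Polynomial.coeff_monomial, Finset.sum_ite_eq', Finset.mem_range]
  split_ifs with h
  · rfl
  · rw [g_of_gt (by push_cast; omega), Nat.cast_zero]

lemma coeff_fullSeries (n i j : ℕ) :
    ((PowerSeries.coeff n fullSeries).coeff i).coeff j = (g n i j : ℚ) := by
  simp only [fullSeries, PowerSeries.coeff_mk, Polynomial.finsetSum_coeff,
    Polynomial.coeff_monomial, Finset.sum_ite_eq', Finset.mem_range]
  split_ifs with h
  · simp only [Polynomial.finsetSum_coeff,
      Polynomial.coeff_monomial, Finset.sum_ite_eq', Finset.mem_range]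
    split_ifs with h
    · rfl
    · rw [g_of_gt (by omega), Nat.cast_zero]
  · rw [g_of_gt (by omega), Nat.cast_zero, Polynomial.coeff_zero]

lemma rowTail_eq (s : ℕ) :
    rowTail s = constEmb (endSeries s 0) + PowerSeries.C Polynomial.X * rowTail (s + 1) := by
  ext n i
  rcases i with _ | i
  · simp [coeff_rowTail, constEmb, endSeries]
  · simp [coeff_rowTail, constEmb, endSeries]
    congr 1
    ring

lemma colTail_eq (s : ℕ) :
    colTail s = constEmb (endSeries 0 s) + PowerSeries.C Polynomial.X * colTail (s + 1) := by
  ext n i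
  rcases i with _ | i
  · simp [coeff_colTail, constEmb, endSeries]
  · simp [coeff_colTail, constEmb, endSeries]
    congr 1
    ring

lemma g_succ_nat (n : ℕ) (i j : ℕ) :
    (g (n + 1) i j : ℚ) = g n (i - 1) j + g n (i + 1 : ℕ) j + g n (i - 1) (j - 1)
      + g n (i + 1 : ℕ) (j + 1 : ℕ) := by
  rw [g_succ n (by omega) (by omega)]
  push_cast
  rfl

lemma coeff_zero_fullSeries : PowerSeries.coeff 0 fullSeries = 1 := by
  ext i j
  rw [coeff_fullSeries, g_zero, Polynomial.coeff_one]
  rcases i with _ | i <;> simp [Polynomial.coeff_one]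
  omega

/-- The functional equation `xy(1 - tS) Q(x,y) = xy - t(Q(x,0) - Q(0,0)) - t(1+y) Q(0,y)`, where
`S = x + x⁻¹ + xy + (xy)⁻¹` is the step polynomial, with the terms that carry a factor `t`
collected on the right. -/
lemma functional_equation_aux :
    PowerSeries.C (Polynomial.X * Polynomial.C Polynomial.X) * fullSeries
      = PowerSeries.C (Polynomial.X * Polynomial.C Polynomial.X) + PowerSeries.X *
        (PowerSeries.C (1 + Polynomial.C Polynomial.X
            + Polynomial.X * (Polynomial.X * Polynomial.C Polynomial.X)
            + Polynomial.X * (Polynomial.X * (Polynomial.C Polynomial.X * Polynomial.C Polynomial.X)))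
              * fullSeries
          - xEmb (rowTail 0) + yEmb (constEmb (endSeries 0 0))
          - PowerSeries.C (1 + Polynomial.C Polynomial.X) * yEmb (colTail 0)) := by
  ext n i j
  rcases n with _ | n
  · simp only [PowerSeries.coeff_C_mul, map_add, PowerSeries.coeff_zero_X_mul,
      coeff_zero_fullSeries]
    simp
  · simp only [PowerSeries.coeff_C_mul, map_add, map_sub, PowerSeries.coeff_succ_X_mul, mul_assoc,
      add_mul, one_mul, Polynomial.coeff_add, Polynomial.coeff_sub, PowerSeries.coeff_C,
      Nat.succ_ne_zero, if_false, zero_add, xEmb, yEmb, constEmb,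
      PowerSeries.coeff_map, endSeries, PowerSeries.coeff_mk, Polynomial.coe_mapRingHom,
      Polynomial.coeff_map, Polynomial.coeff_C]
    rcases i with _ | _ | i <;> rcases j with _ | _ | j <;>
    simp only [Polynomial.coeff_X_mul, Polynomial.coeff_X_mul_zero, Polynomial.coeff_C_mul,
      coeff_rowTail, coeff_colTail, coeff_fullSeries, Polynomial.coeff_zero,
      if_true, Polynomial.coeff_C_zero, Polynomial.coeff_C_succ,
      Nat.succ_ne_zero, if_false, zero_add, add_zero]
    all_goals
      try rw [g_succ_nat]
      simp [g_of_neg]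
      try ring_nf

lemma functional_equation {t x y : PowerSeries (Polynomial (Polynomial ℚ))}
    (ht : t = PowerSeries.X) (hx : x = PowerSeries.C Polynomial.X)
    (hy : y = PowerSeries.C (Polynomial.C Polynomial.X)) :
    (x * y - t * (1 + y) * (x ^ 2 * y + 1)) * fullSeries
      = x * y - t * (xEmb (rowTail 0) - yEmb (constEmb (endSeries 0 0)))
        - t * (1 + y) * yEmb (colTail 0) := by
  have h := functional_equation_aux
  simp only [map_add, map_mul, map_one, ← ht, ← hx, ← hy] at h
  linear_combination h

/-! ### The kernel curve and its invariants -/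

/-- Evaluation at `q` of the polynomial variable of `ℚ[x]⟦t⟧`. -/
def evalAt (q : ℚ) : PowerSeries (Polynomial ℚ) →+* PowerSeries ℚ :=
  PowerSeries.map (Polynomial.evalRingHom q)

/-- The specialisation `x = 0` on `ℚ[y][x]⟦t⟧`. -/
def xZero : PowerSeries (Polynomial (Polynomial ℚ)) →+* PowerSeries (Polynomial ℚ) :=
  PowerSeries.map (Polynomial.evalRingHom 0)

/-- The specialisation `y = 0` on `ℚ[y][x]⟦t⟧`. -/
def yZero : PowerSeries (Polynomial (Polynomial ℚ)) →+* PowerSeries (Polynomial ℚ) :=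
  PowerSeries.map (Polynomial.mapRingHom (Polynomial.evalRingHom 0))

lemma xZero_yEmb (f : PowerSeries (Polynomial ℚ)) : xZero (yEmb f) = f := by
  ext n i
  simp [xZero, yEmb]

lemma yZero_xEmb (f : PowerSeries (Polynomial ℚ)) : yZero (xEmb f) = f := by
  ext n i
  simp [yZero, xEmb, Polynomial.coeff_map]

lemma xZero_xEmb (f : PowerSeries (Polynomial ℚ)) : xZero (xEmb f) = constEmb (evalAt 0 f) := by
  ext n i
  simp [xZero, xEmb, constEmb, evalAt, Polynomial.eval_map, Polynomial.eval₂_at_zero,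
    Polynomial.coeff_zero_eq_eval_zero]

lemma yZero_yEmb (f : PowerSeries (Polynomial ℚ)) : yZero (yEmb f) = constEmb (evalAt 0 f) := by
  ext n i
  simp [yZero, yEmb, constEmb, evalAt]

lemma xEmb_constEmb (f : PowerSeries ℚ) : xEmb (constEmb f) = yEmb (constEmb f) := by
  ext n i
  simp [yEmb, xEmb, constEmb]

lemma exists_eq_X_mul {f : PowerSeries (Polynomial (Polynomial ℚ))} (h : xZero f = 0) :
    ∃ f', f = PowerSeries.C Polynomial.X * f' := by
  refine ⟨PowerSeries.mk fun n => (PowerSeries.coeff n f).divX, ?_⟩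
  ext1 n
  have h0 : (PowerSeries.coeff n f).coeff 0 = 0 := by
    have := congrArg (PowerSeries.coeff n) h
    simpa [xZero, Polynomial.coeff_zero_eq_eval_zero] using this
  have := Polynomial.X_mul_divX_add (PowerSeries.coeff n f)
  rw [h0, map_zero, add_zero] at this
  simp [this]

lemma X_dvd_of_C_mul {R : Type*} [CommRing R] [IsDomain R] {r : R} (hr : r ≠ 0)
    {f : PowerSeries R} (h : PowerSeries.X ∣ PowerSeries.C r * f) : PowerSeries.X ∣ f := by
  rw [PowerSeries.X_dvd_iff] at h ⊢
  simpa [hr] using h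

/-- The invariant lemma. If a series in `x`, vanishing at `x = 0` and scaled by a factor `M(y)`
with `M(0) = 1`, and a series in `y` agree on the kernel curve `xy = t P(x,y)`, then they agree identically:
setting `x = 0` and `y = 0` expresses the difference as `t` times the quotient `H`, so `xyH` is
divisible by a higher and higher power of `t`. -/
lemma invariant_lemma {A B M : PowerSeries (Polynomial ℚ)}
    {H P : PowerSeries (Polynomial (Polynomial ℚ))}
    (hA : evalAt 0 A = 0) (hM : evalAt 0 M = 1)
    (h : xEmb A * yEmb M - yEmb B
      = (PowerSeries.C (Polynomial.X * Polynomial.C Polynomial.X) - PowerSeries.X * P) * H) :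
    H = 0 := by
  have htx : xZero PowerSeries.X = PowerSeries.X := PowerSeries.map_X _
  have hty : yZero PowerSeries.X = PowerSeries.X := PowerSeries.map_X _
  have htx' : xEmb PowerSeries.X = PowerSeries.X := PowerSeries.map_X _
  have hty' : yEmb PowerSeries.X = PowerSeries.X := PowerSeries.map_X _
  have hc0 : xZero (PowerSeries.C Polynomial.X) = 0 := by
    simp [xZero]
  have hc1 : yZero (PowerSeries.C (Polynomial.C Polynomial.X)) = 0 := by
    simp [yZero]
  have hB : B = PowerSeries.X * xZero P * xZero H := by
    have := congrArg xZero h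
    simp only [map_sub, map_mul, xZero_xEmb, xZero_yEmb, hA, map_zero, htx, hc0] at this
    linear_combination -this
  have hA' : A = yZero (yEmb B) - PowerSeries.X * yZero P * yZero H := by
    have := congrArg yZero h
    simp only [map_sub, map_mul, yZero_xEmb, yZero_yEmb, hM, map_one, hty, hc1] at this
    rw [← yZero_yEmb] at this
    linear_combination this
  have key : ∀ n : ℕ, PowerSeries.X ^ n ∣ H := by
    intro n
    induction n with
    | zero => simp
    | succ n ih =>
      obtain ⟨K, rfl⟩ := ih
      rw [pow_succ]
      refine mul_dvd_mul_left _ (X_dvd_of_C_mul (r := Polynomial.X * Polynomial.C Polynomial.X)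
        (by simp) ?_)
      rw [hA', hB] at h
      simp only [map_mul, map_pow, map_sub, htx, hty, htx', hty'] at h
      refine ⟨P * K + xEmb (yZero (yEmb (xZero P)) * yZero (yEmb (xZero K))
        - yZero P * yZero K) * yEmb M - yEmb (xZero P * xZero K), ?_⟩
      have hX : (PowerSeries.X : PowerSeries (Polynomial (Polynomial ℚ))) ^ n ≠ 0 :=
        pow_ne_zero _ PowerSeries.X_ne_zero
      refine mul_left_cancel₀ hX ?_
      simp only [map_mul, map_sub]
      linear_combination -h
  ext1 n
  exact (PowerSeries.X_pow_dvd_iff.mp (key (n + 1))) n (Nat.lt_succ_self n)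

section CubicAlgebra

variable {S : Type*} [CommRing S]

/-- `t x³ (I₀ (I₁ - c) - P(I₁))`, where `V = x I₁`, `I₀ = (x + x⁻¹)/t - (x + x⁻¹)²` and `P` is the
cubic polynomial `t P(Z) = -t Z³ + (1 + tc) Z² + γ Z + δ`. -/
def cubicX (t c γ δ x V : S) : S :=
  (x * (1 + x ^ 2) - t * (1 + x ^ 2) ^ 2) * (V - c * x) + t * V ^ 3 - (1 + t * c) * x * V ^ 2
    - γ * x ^ 2 * V - δ * x ^ 3

/-- `t³ (1 + y)³ (J₀ (J₁ - c) - P(J₁))`, where `W = t (1 + y) J₁`, `y W₁ = t (1 + y) (J₁ - c)`,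
`J₀ = (1 + y)²/y + y/(t(1 + y))² - 4` and `P` is as in `cubicX`. -/
def cubicY (t c γ δ y W W₁ : S) : S :=
  (t ^ 2 * (1 + y) ^ 4 + y ^ 2 - 4 * t ^ 2 * y * (1 + y) ^ 2) * W₁ + W ^ 3
    - (1 + t * c) * (1 + y) * W ^ 2 - γ * t * (1 + y) ^ 2 * W - δ * t ^ 2 * (1 + y) ^ 3

lemma map_cubicX {S' : Type*} [CommRing S'] (f : S →+* S') (t c γ δ x V : S) :
    f (cubicX t c γ δ x V) = cubicX (f t) (f c) (f γ) (f δ) (f x) (f V) := by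
  simp [cubicX]

lemma map_cubicY {S' : Type*} [CommRing S'] (f : S →+* S') (t c γ δ y W W₁ : S) :
    f (cubicY t c γ δ y W W₁) = cubicY (f t) (f c) (f γ) (f δ) (f y) (f W) (f W₁) := by
  simp [cubicY, map_ofNat]

/-- On the kernel curve `I₀ = J₀` and, by the functional equation, `I₁ = J₁`. Hence the two cubic
expressions agree modulo the kernel. -/
lemma kernel_dvd (t x y c γ δ Q P D W₁ : S)
    (hK : (x * y - t * (1 + y) * (x ^ 2 * y + 1)) * Q
      = x * y - t * (x * P) - t * (1 + y) * D)
    (hW : y * W₁ = y - t ^ 2 * (1 + y) ^ 2 * D - t * (1 + y) * c) :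
    ∃ H, t ^ 2 * (1 + y) ^ 3 * cubicX t c γ δ x (1 + t * x ^ 2 * P)
        - x ^ 3 * cubicY t c γ δ y (y - t ^ 2 * (1 + y) ^ 2 * D) W₁
      = (x * y - t * (1 + y) * (x ^ 2 * y + 1)) * H := by
  set V := 1 + t * x ^ 2 * P with hV
  set W := y - t ^ 2 * (1 + y) ^ 2 * D with hWdef
  set k := x * y - t * (1 + y) * (x ^ 2 * y + 1) with hk
  set n := x * (1 + x ^ 2) - t * (1 + x ^ 2) ^ 2 with hn
  set E := t * x * (1 + y) * Q + 1 with hE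
  set N := t ^ 2 * (1 + y) ^ 4 + y ^ 2 - 4 * t ^ 2 * y * (1 + y) ^ 2 with hN
  have h1 : t * (1 + y) * V - x * W = -(k * E) := by
    rw [hE, hV, hWdef]
    linear_combination t * x * (1 + y) * hK + hk
  have h2 : x ^ 2 * N - t * y * (1 + y) ^ 2 * n = k * (x * y - t * (1 + y) * (x ^ 2 + y)) := by
    rw [hN, hn, hk]
    ring
  refine ⟨-(t * (1 + y) ^ 2 * n * E) - x * (x * y - t * (1 + y) * (x ^ 2 + y)) * W₁
    - E * ((t * (1 + y) * V) ^ 2 + t * (1 + y) * V * (x * W) + (x * W) ^ 2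
      - (1 + t * c) * x * (1 + y) * (t * (1 + y) * V + x * W)
      - γ * x ^ 2 * t * (1 + y) ^ 2), ?_⟩
  unfold cubicX cubicY
  rw [← hn, ← hN]
  linear_combination (t * (1 + y) ^ 2 * n) * h1 - (x * W₁) * h2 - (t * (1 + y) ^ 2 * n * x) * hW
    + ((t * (1 + y) * V) ^ 2 + t * (1 + y) * V * (x * W) + (x * W) ^ 2
      - (1 + t * c) * x * (1 + y) * (t * (1 + y) * V + x * W)
      - γ * x ^ 2 * t * (1 + y) ^ 2) * h1

/-- The coefficients `γ` and `δ` are chosen so that the pole of `I₀ (I₁ - c) - P(I₁)` at `x = 0`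
and its constant term cancel. -/
lemma cubicX_eq (t x a p₁ p₂ P₃ : S) :
    ∃ A, cubicX t (-(t * a)) (2 * t ^ 2 * p₁ - 2 * t + t * a)
        (2 * t ^ 2 * p₂ - t * p₁ + 2 * t ^ 3 * a * p₁ - 2 * t ^ 2 * a + 1) x
        (1 + t * x ^ 2 * (p₁ + x * (p₂ + x * P₃))) = x ^ 4 * A := by
  refine ⟨(-1 + 2 * t ^ 2 * a) * (t * p₂ + x * (t * P₃)) + 2 * t ^ 2 * P₃
    + (-t + t * a - t ^ 2 * a * x)
    + t * (p₁ + x * (p₂ + x * P₃)) * (-2 * t + x - t * x ^ 2)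
    + 3 * t * (t * (p₁ + x * (p₂ + x * P₃))) ^ 2
    + t * x ^ 2 * (t * (p₁ + x * (p₂ + x * P₃))) ^ 3
    - (1 - t ^ 2 * a) * x * (t * (p₁ + x * (p₂ + x * P₃))) ^ 2
    - (2 * t ^ 2 * p₁ - 2 * t + t * a) * (t * (p₁ + x * (p₂ + x * P₃))), ?_⟩
  unfold cubicX
  ring

end CubicAlgebra

/-- `c = J₁(0) = -t Q(0,0)`. -/
def cParam : PowerSeries ℚ := -(PowerSeries.X * endSeries 0 0)

/-- The coefficient `γ` of the cubic polynomial. -/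
def gammaParam : PowerSeries ℚ :=
  2 * PowerSeries.X ^ 2 * endSeries 1 0 - 2 * PowerSeries.X + PowerSeries.X * endSeries 0 0

/-- The coefficient `δ` of the cubic polynomial. -/
def deltaParam : PowerSeries ℚ :=
  2 * PowerSeries.X ^ 2 * endSeries 2 0 - PowerSeries.X * endSeries 1 0
    + 2 * PowerSeries.X ^ 3 * endSeries 0 0 * endSeries 1 0
    - 2 * PowerSeries.X ^ 2 * endSeries 0 0 + 1

/-- `V = x I₁ = 1 + t x (Q(x,0) - Q(0,0))`. -/
def rowInv : PowerSeries (Polynomial ℚ) :=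
  1 + PowerSeries.X * PowerSeries.C Polynomial.X ^ 2 * rowTail 1

/-- `W = t (1 + y) J₁ = y - t² (1 + y)² Q(0,y)`. -/
def colInv : PowerSeries (Polynomial ℚ) :=
  PowerSeries.C Polynomial.X
    - PowerSeries.X ^ 2 * (1 + PowerSeries.C Polynomial.X) ^ 2 * colTail 0

/-- `W₁ = t (1 + y) (J₁ - c) / y`. -/
def colInvTail : PowerSeries (Polynomial ℚ) :=
  1 - PowerSeries.X ^ 2 * (1 + PowerSeries.C Polynomial.X) * constEmb (endSeries 0 0)
    - PowerSeries.X ^ 2 * (1 + PowerSeries.C Polynomial.X) ^ 2 * colTail 1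

lemma X_mul_colInvTail : PowerSeries.C Polynomial.X * colInvTail
    = colInv - PowerSeries.X * (1 + PowerSeries.C Polynomial.X) * constEmb cParam := by
  have hX : constEmb PowerSeries.X = PowerSeries.X := PowerSeries.map_X _
  rw [colInv, colTail_eq, colInvTail, cParam, map_neg, map_mul, hX]
  ring

/-- Both sides of the relation `I₀ (I₁ - c) - P(I₁) = J₀ (J₁ - c) - P(J₁)` on the kernel curve are
zero: after multiplication by powers of `t`, `x` and `1 + y` it is a relation to which
`invariant_lemma` applies. This gives one cubic equation for `Q(x,0)` and one for `Q(0,y)`. -/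
lemma cubic_equations :
    cubicX PowerSeries.X (constEmb cParam) (constEmb gammaParam) (constEmb deltaParam)
      (PowerSeries.C Polynomial.X) rowInv = 0 ∧
    cubicY PowerSeries.X (constEmb cParam) (constEmb gammaParam) (constEmb deltaParam)
      (PowerSeries.C Polynomial.X) colInv colInvTail = 0 := by
  have hX : constEmb PowerSeries.X = PowerSeries.X := PowerSeries.map_X _
  have htx : xEmb PowerSeries.X = PowerSeries.X := PowerSeries.map_X _
  have hty : yEmb PowerSeries.X = PowerSeries.X := PowerSeries.map_X _
  have hxx : xEmb (PowerSeries.C Polynomial.X) = PowerSeries.C Polynomial.X := by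
    simp [xEmb]
  have hyy : yEmb (PowerSeries.C Polynomial.X) = PowerSeries.C (Polynomial.C Polynomial.X) := by
    simp [yEmb]
  obtain ⟨A, hA⟩ : ∃ A, cubicX PowerSeries.X (constEmb cParam) (constEmb gammaParam)
      (constEmb deltaParam) (PowerSeries.C Polynomial.X) rowInv
        = PowerSeries.C Polynomial.X ^ 4 * A := by
    obtain ⟨A, hA⟩ := cubicX_eq PowerSeries.X (PowerSeries.C Polynomial.X)
      (constEmb (endSeries 0 0)) (constEmb (endSeries 1 0)) (constEmb (endSeries 2 0)) (rowTail 3)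
    refine ⟨A, ?_⟩
    rw [← hA, rowInv, rowTail_eq 1, rowTail_eq 2]
    simp only [cParam, gammaParam, deltaParam, map_neg, map_mul, map_add, map_sub, map_pow, hX,
      map_ofNat, map_one]
  set F := cubicX PowerSeries.X (constEmb cParam) (constEmb gammaParam) (constEmb deltaParam)
      (PowerSeries.C Polynomial.X) rowInv with hF
  set G := cubicY PowerSeries.X (constEmb cParam) (constEmb gammaParam) (constEmb deltaParam)
      (PowerSeries.C Polynomial.X) colInv colInvTail with hG
  obtain ⟨t, ht⟩ : ∃ t : PowerSeries (Polynomial (Polynomial ℚ)), t = PowerSeries.X := ⟨_, rfl⟩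
  obtain ⟨x, hx⟩ : ∃ x : PowerSeries (Polynomial (Polynomial ℚ)),
    x = PowerSeries.C Polynomial.X := ⟨_, rfl⟩
  obtain ⟨y, hy⟩ : ∃ y : PowerSeries (Polynomial (Polynomial ℚ)),
    y = PowerSeries.C (Polynomial.C Polynomial.X) := ⟨_, rfl⟩
  -- the two cubics agree modulo the kernel
  obtain ⟨H, hH⟩ : ∃ H, t ^ 2 * (1 + y) ^ 3 * xEmb F - x ^ 3 * yEmb G
      = (x * y - t * (1 + y) * (x ^ 2 * y + 1)) * H := by
    obtain ⟨H, hH⟩ := kernel_dvd t x y (yEmb (constEmb cParam)) (yEmb (constEmb gammaParam))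
      (yEmb (constEmb deltaParam)) fullSeries (xEmb (rowTail 1)) (yEmb (colTail 0))
      (yEmb colInvTail) (by
        rw [functional_equation ht hx hy, rowTail_eq 0, map_add, map_mul, xEmb_constEmb, hxx, hx]
        ring) (by
        have := congrArg yEmb X_mul_colInvTail
        simp only [colInv, map_mul, map_sub, map_add, map_one, map_pow, hty, hyy, ← ht, ← hy]
          at this
        linear_combination this)
    refine ⟨H, ?_⟩
    rw [← hH, hF, hG, map_cubicX, map_cubicY, rowInv, colInv]
    simp only [map_mul, map_sub, map_add, map_one, map_pow, hty, hyy, htx, hxx, ← ht, ← hy,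
      ← hx, xEmb_constEmb]
  -- the factor `x³` cancels, since the kernel does not vanish at `x = 0`
  have hCX : ∀ {R : Type} [CommRing R] [Nontrivial R],
      (PowerSeries.C Polynomial.X : PowerSeries (Polynomial R)) ≠ 0 := by
    intro R _ _
    exact (map_ne_zero_iff _ PowerSeries.C_injective).mpr Polynomial.X_ne_zero
  have hx0 : x ≠ 0 := hx ▸ hCX
  have hz : ∀ {K L : PowerSeries (Polynomial (Polynomial ℚ))},
      x * L = (x * y - t * (1 + y) * (x ^ 2 * y + 1)) * K →
      ∃ K', K = x * K' ∧ L = (x * y - t * (1 + y) * (x ^ 2 * y + 1)) * K' := by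
    intro K L h
    have hxz : xZero x = 0 := by simp [hx, xZero]
    have htz : xZero t ≠ 0 := by simp [ht, xZero]
    have hyz : (1 : PowerSeries (Polynomial ℚ)) + xZero y ≠ 0 := by
      intro h0
      have := congrArg (fun f => (PowerSeries.coeff 0 f).coeff 0) h0
      simp [hy, xZero] at this
    have h0 := congrArg xZero h
    simp only [map_mul, map_sub, map_add, map_one, map_pow, hxz] at h0
    have hK : xZero K = 0 := by
      have : xZero t * (1 + xZero y) * xZero K = 0 := by linear_combination h0
      simpa [htz, hyz] using this
    obtain ⟨K', hK'⟩ := exists_eq_X_mul hK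
    rw [← hx] at hK'
    refine ⟨K', hK', mul_left_cancel₀ hx0 ?_⟩
    rw [h, hK']
    ring
  have hH' : x * (x * (x * (t ^ 2 * (1 + y) ^ 3 * (x * xEmb A) - yEmb G)))
      = (x * y - t * (1 + y) * (x ^ 2 * y + 1)) * H := by
    rw [← hH, hA, map_mul, map_pow, hxx, ← hx]
    ring
  obtain ⟨H₁, -, h₁⟩ := hz hH'
  obtain ⟨H₂, -, h₂⟩ := hz h₁
  obtain ⟨H₃, -, h₃⟩ := hz h₂
  have hev : evalAt 0 (PowerSeries.C Polynomial.X) = 0 := by simp [evalAt]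
  have hzero : H₃ = 0 := by
    refine invariant_lemma (A := PowerSeries.X ^ 2 * (PowerSeries.C Polynomial.X * A))
      (B := G) (M := (1 + PowerSeries.C Polynomial.X) ^ 3)
      (P := (1 + y) * (x ^ 2 * y + 1)) ?_ ?_ ?_
    · rw [map_mul, map_mul, hev]
      ring
    · rw [map_pow, map_add, hev]
      simp
    · simp only [map_mul, map_add, map_pow, map_one, htx, hxx, hyy, ← ht, ← hx, ← hy]
      linear_combination h₃
  rw [hzero, mul_zero] at h₃
  have hG0 : G = 0 := by
    have := congrArg xZero h₃
    have hxz : xZero x = 0 := by simp [hx, xZero]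
    simp only [map_mul, map_sub, map_zero, hxz, xZero_yEmb] at this
    linear_combination -this
  refine ⟨?_, hG0⟩
  have hA0 : A = 0 := by
    have := congrArg yZero h₃
    have hyz : yZero y = 0 := by simp [hy, yZero]
    have htz : yZero t ≠ 0 := by simp [ht, yZero]
    have hxz : yZero x ≠ 0 := by simpa [hx, yZero] using hCX
    simp only [map_mul, map_sub, map_add, map_one, map_pow, map_zero, hyz, yZero_xEmb, hG0] at this
    simpa [htz, hxz] using this
  rw [hA, hA0, mul_zero]

/-! ### Double roots of the cubic equations -/

/-- Differentiation of `ℚ[x]⟦t⟧` with respect to `x`. -/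
def xDeriv : Derivation ℚ (PowerSeries (Polynomial ℚ)) (PowerSeries (Polynomial ℚ)) :=
  Derivation.mk'
    { toFun := fun f => PowerSeries.mk fun n => Polynomial.derivative (PowerSeries.coeff n f)
      map_add' := fun f h => by ext1 n; simp
      map_smul' := fun q f => by ext1 n; simp }
    (fun f h => by
      ext1 n
      simp only [LinearMap.coe_mk, AddHom.coe_mk, PowerSeries.coeff_mk, PowerSeries.coeff_mul,
        Polynomial.derivative_sum, Polynomial.derivative_mul, Finset.sum_add_distrib, map_add,
        smul_eq_mul]
      rw [add_comm, ← Finset.Nat.sum_antidiagonal_swap (n := n) (f := fun p =>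
        Polynomial.derivative (PowerSeries.coeff p.1 f) * PowerSeries.coeff p.2 h)]
      simp [mul_comm])

lemma coeff_xDeriv (f : PowerSeries (Polynomial ℚ)) (n : ℕ) :
    PowerSeries.coeff n (xDeriv f) = Polynomial.derivative (PowerSeries.coeff n f) := by
  simp [xDeriv]

lemma xDeriv_X : xDeriv PowerSeries.X = 0 := by
  ext1 n
  rw [coeff_xDeriv, PowerSeries.coeff_X]
  split_ifs <;> simp

lemma xDeriv_constEmb (u : PowerSeries ℚ) : xDeriv (constEmb u) = 0 := by
  ext1 n
  simp [coeff_xDeriv, constEmb]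

lemma xDeriv_C_X : xDeriv (PowerSeries.C Polynomial.X) = 1 := by
  ext1 n
  rw [coeff_xDeriv, PowerSeries.coeff_C, PowerSeries.coeff_one]
  split_ifs <;> simp

lemma evalAt_X (q : ℚ) : evalAt q PowerSeries.X = PowerSeries.X := PowerSeries.map_X _

lemma evalAt_C_X (q : ℚ) : evalAt q (PowerSeries.C Polynomial.X) = PowerSeries.C q := by
  simp [evalAt]

lemma evalAt_constEmb (q : ℚ) (u : PowerSeries ℚ) : evalAt q (constEmb u) = u := by
  ext n
  simp [evalAt, constEmb]

instance charZero_powerSeries : CharZero (PowerSeries ℚ) := algebraRat.charZero _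

lemma constantCoeff_evalAt (q : ℚ) (f : PowerSeries (Polynomial ℚ)) :
    PowerSeries.constantCoeff (evalAt q f) = (PowerSeries.constantCoeff f).eval q := by
  simp only [← PowerSeries.coeff_zero_eq_constantCoeff_apply, evalAt, PowerSeries.coeff_map,
    Polynomial.coe_evalRingHom]

lemma constantCoeff_xDeriv (f : PowerSeries (Polynomial ℚ)) :
    PowerSeries.constantCoeff (xDeriv f) = Polynomial.derivative (PowerSeries.constantCoeff f) := by
  simp only [← PowerSeries.coeff_zero_eq_constantCoeff_apply, coeff_xDeriv]

lemma constantCoeff_rowInv : PowerSeries.constantCoeff rowInv = 1 := by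
  simp [rowInv]

lemma constantCoeff_colInv : PowerSeries.constantCoeff colInv = Polynomial.X := by
  simp [colInv]

lemma cubicX_deriv : xDeriv (cubicX PowerSeries.X (constEmb cParam) (constEmb gammaParam)
    (constEmb deltaParam) (PowerSeries.C Polynomial.X) rowInv) = 0 := by
  rw [cubic_equations.1, map_zero]

lemma cubicY_deriv : xDeriv (cubicY PowerSeries.X (constEmb cParam) (constEmb gammaParam)
    (constEmb deltaParam) (PowerSeries.C Polynomial.X) colInv colInvTail) = 0 := by
  rw [cubic_equations.2, map_zero]

/-- At `x = 1` the derivative of `I₀` vanishes while that of `I₁` does not, so differentiating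
the cubic relation shows that `I₁(1)` is a double root of `I₀(1) (Z - c) - P(Z)`. -/
lemma double_root_one : ∃ v : PowerSeries ℚ,
    (2 - 4 * PowerSeries.X) * (v - cParam) + PowerSeries.X * v ^ 3
      - (1 + PowerSeries.X * cParam) * v ^ 2 - gammaParam * v - deltaParam = 0 ∧
    (2 - 4 * PowerSeries.X) + 3 * PowerSeries.X * v ^ 2
      - 2 * (1 + PowerSeries.X * cParam) * v - gammaParam = 0 := by
  have h0 := congrArg (evalAt 1) cubic_equations.1
  have h1 := congrArg (evalAt 1) cubicX_deriv
  have hne : evalAt 1 (xDeriv rowInv) - evalAt 1 rowInv ≠ 0 := by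
    intro h
    have := congrArg PowerSeries.constantCoeff h
    simp [constantCoeff_evalAt, constantCoeff_xDeriv, constantCoeff_rowInv] at this
  simp only [map_cubicX, evalAt_X, evalAt_C_X, evalAt_constEmb, map_zero, map_one] at h0
  simp only [cubicX, map_add, map_sub, Derivation.leibniz, Derivation.leibniz_pow, xDeriv_X,
    xDeriv_constEmb, xDeriv_C_X, evalAt_X, evalAt_C_X, evalAt_constEmb, map_zero, map_one,
    smul_eq_mul, nsmul_eq_mul, map_mul, map_pow, Derivation.map_one_eq_zero, map_natCast] at h1
  unfold cubicX at h0
  refine ⟨evalAt 1 rowInv, by linear_combination h0, mul_left_cancel₀ hne ?_⟩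
  push_cast at h1
  linear_combination h1 - 3 * h0

/-- The analogue of `double_root_one` at `x = -1`. -/
lemma double_root_neg_one : ∃ v : PowerSeries ℚ,
    (-2 - 4 * PowerSeries.X) * (v - cParam) + PowerSeries.X * v ^ 3
      - (1 + PowerSeries.X * cParam) * v ^ 2 - gammaParam * v - deltaParam = 0 ∧
    (-2 - 4 * PowerSeries.X) + 3 * PowerSeries.X * v ^ 2
      - 2 * (1 + PowerSeries.X * cParam) * v - gammaParam = 0 := by
  have h0 := congrArg (evalAt (-1)) cubic_equations.1
  have h1 := congrArg (evalAt (-1)) cubicX_deriv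
  have hne : evalAt (-1) (xDeriv rowInv) + evalAt (-1) rowInv ≠ 0 := by
    intro h
    have := congrArg PowerSeries.constantCoeff h
    simp [constantCoeff_evalAt, constantCoeff_xDeriv, constantCoeff_rowInv] at this
  simp only [map_cubicX, evalAt_X, evalAt_C_X, evalAt_constEmb, map_zero, map_one, map_neg] at h0
  simp only [cubicX, map_add, map_sub, Derivation.leibniz, Derivation.leibniz_pow, xDeriv_X,
    xDeriv_constEmb, xDeriv_C_X, evalAt_X, evalAt_C_X, evalAt_constEmb, map_zero, map_one, map_neg,
    smul_eq_mul, nsmul_eq_mul, map_mul, map_pow, Derivation.map_one_eq_zero, map_natCast] at h1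
  unfold cubicX at h0
  refine ⟨-evalAt (-1) rowInv, by linear_combination -h0, mul_left_cancel₀ hne ?_⟩
  push_cast at h1
  linear_combination h1 + 3 * h0

/-- The analogue of `double_root_one` at `y = 1`, where the derivative of `J₀` vanishes; the double
root is `J₁(1) = w / 2t`. -/
lemma double_root_col : ∃ w : PowerSeries ℚ,
    (w - 2 * PowerSeries.X * cParam) + w ^ 3 - 2 * (1 + PowerSeries.X * cParam) * w ^ 2
      - 4 * PowerSeries.X * gammaParam * w - 8 * PowerSeries.X ^ 2 * deltaParam = 0 ∧
    1 + 3 * w ^ 2 - 4 * (1 + PowerSeries.X * cParam) * w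
      - 4 * PowerSeries.X * gammaParam = 0 := by
  have h0 := congrArg (evalAt 1) cubic_equations.2
  have h1 := congrArg (evalAt 1) cubicY_deriv
  have h2 := congrArg (evalAt 1) X_mul_colInvTail
  have h3 := congrArg (fun f => evalAt 1 (xDeriv f)) X_mul_colInvTail
  have hne : 2 * evalAt 1 (xDeriv colInv) - evalAt 1 colInv ≠ 0 := by
    intro h
    have := congrArg PowerSeries.constantCoeff h
    simp [constantCoeff_evalAt, constantCoeff_xDeriv, constantCoeff_colInv, map_ofNat] at this
    norm_num at this
  simp only [map_cubicY, evalAt_X, evalAt_C_X, evalAt_constEmb, map_zero, map_one] at h0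
  simp only [map_add, map_sub, Derivation.leibniz, xDeriv_X,
    xDeriv_constEmb, xDeriv_C_X, evalAt_X, evalAt_C_X, evalAt_constEmb, map_zero, map_one,
    smul_eq_mul, map_mul, Derivation.map_one_eq_zero] at h2 h3
  have hx4 : xDeriv 4 = 0 := by
    rw [← Nat.cast_ofNat, Derivation.map_natCast]
  simp only [cubicY, map_add, map_sub, Derivation.leibniz, Derivation.leibniz_pow, xDeriv_X,
    xDeriv_constEmb, xDeriv_C_X, evalAt_X, evalAt_C_X, evalAt_constEmb, map_zero, map_one, hx4,
    map_ofNat,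
    smul_eq_mul, nsmul_eq_mul, map_mul, map_pow, Derivation.map_one_eq_zero, map_natCast] at h1
  unfold cubicY at h0
  refine ⟨evalAt 1 colInv, by linear_combination h0 - h2, mul_left_cancel₀ hne ?_⟩
  push_cast at h1
  linear_combination 2 * h1 - 3 * h0 - 2 * h3 + h2

/-- With `U = 2t (Z - c)`, the three double roots of `double_root_one`, `double_root_neg_one` and
`double_root_col` become the three roots of the single cubic `U³ - s U² - p`, with
`s = 1 - 2tc` and `p = -4t² (c² + γc + δ)`. -/
lemma double_roots_vieta : ∃ U₁ U₂ U₃ s p κ : PowerSeries ℚ,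
    s = 1 - 2 * PowerSeries.X * cParam ∧
    p = -4 * PowerSeries.X ^ 2 * (cParam ^ 2 + gammaParam * cParam + deltaParam) ∧
    κ = 8 * PowerSeries.X * cParam + 4 * PowerSeries.X * gammaParam
      - 4 * PowerSeries.X ^ 2 * cParam ^ 2 ∧
    s = U₁ + U₂ + U₃ ∧
    U₁ ^ 3 = s * U₁ ^ 2 + p ∧ U₂ ^ 3 = s * U₂ ^ 2 + p ∧ U₃ ^ 3 = s * U₃ ^ 2 + p ∧
    U₁ * U₂ + U₁ * U₃ + U₂ * U₃ = 0 ∧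
    4 * PowerSeries.X * (2 - 4 * PowerSeries.X) = -3 * U₁ ^ 2 + 4 * s * U₁ + κ ∧
    4 * PowerSeries.X * (-2 - 4 * PowerSeries.X) = -3 * U₂ ^ 2 + 4 * s * U₂ + κ ∧
    1 = -3 * U₃ ^ 2 + 4 * s * U₃ + κ := by
  obtain ⟨v₁, a₁, b₁⟩ := double_root_one
  obtain ⟨v₂, a₂, b₂⟩ := double_root_neg_one
  obtain ⟨w, a₃, b₃⟩ := double_root_col
  obtain ⟨t, ht⟩ : ∃ t : PowerSeries ℚ, t = PowerSeries.X := ⟨_, rfl⟩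
  have ht0 : t ≠ 0 := ht ▸ PowerSeries.X_ne_zero
  have hcc : PowerSeries.constantCoeff t = 0 := by simp [ht]
  rw [← ht] at a₁ b₁ a₂ b₂ a₃ b₃
  simp only [← ht]
  obtain ⟨U₁, hU₁⟩ : ∃ U, U = 2 * t * (v₁ - cParam) := ⟨_, rfl⟩
  obtain ⟨U₂, hU₂⟩ : ∃ U, U = 2 * t * (v₂ - cParam) := ⟨_, rfl⟩
  obtain ⟨U₃, hU₃⟩ : ∃ U, U = w - 2 * t * cParam := ⟨_, rfl⟩
  obtain ⟨s, hs⟩ : ∃ s, s = 1 - 2 * t * cParam := ⟨_, rfl⟩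
  obtain ⟨p, hp⟩ : ∃ p, p = -4 * t ^ 2 * (cParam ^ 2 + gammaParam * cParam + deltaParam) :=
    ⟨_, rfl⟩
  obtain ⟨κ, hκ⟩ : ∃ κ, κ = 8 * t * cParam + 4 * t * gammaParam - 4 * t ^ 2 * cParam ^ 2 :=
    ⟨_, rfl⟩
  have e₁ : 4 * t * (2 - 4 * t) = -3 * U₁ ^ 2 + 4 * s * U₁ + κ := by
    rw [hU₁, hs, hκ]
    linear_combination 4 * t * b₁
  have e₂ : 4 * t * (-2 - 4 * t) = -3 * U₂ ^ 2 + 4 * s * U₂ + κ := by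
    rw [hU₂, hs, hκ]
    linear_combination 4 * t * b₂
  have e₃ : 1 = -3 * U₃ ^ 2 + 4 * s * U₃ + κ := by
    rw [hU₃, hs, hκ]
    linear_combination b₃
  have h2 : (2 : PowerSeries ℚ) ≠ 0 := two_ne_zero
  have f₁ : U₁ ^ 3 = s * U₁ ^ 2 + p := by
    refine mul_left_cancel₀ h2 ?_
    rw [hU₁, hs, hp]
    linear_combination -(8 * t ^ 2 * a₁) + 8 * t ^ 2 * (v₁ - cParam) * b₁
  have f₂ : U₂ ^ 3 = s * U₂ ^ 2 + p := by
    refine mul_left_cancel₀ h2 ?_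
    rw [hU₂, hs, hp]
    linear_combination -(8 * t ^ 2 * a₂) + 8 * t ^ 2 * (v₂ - cParam) * b₂
  have f₃ : U₃ ^ 3 = s * U₃ ^ 2 + p := by
    refine mul_left_cancel₀ h2 ?_
    rw [hU₃, hs, hp]
    linear_combination -a₃ + (w - 2 * t * cParam) * b₃
  -- the three roots are distinct because the values of `I₀` at the three points are
  have n₁₂ : U₁ - U₂ ≠ 0 := by
    intro h
    have : (16 : PowerSeries ℚ) * t = 0 := by
      linear_combination e₁ - e₂ + (-3 * (U₁ + U₂) + 4 * s) * h
    simp [ht0] at this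
  have n₁₃ : U₁ - U₃ ≠ 0 := by
    intro h
    have : 4 * t * (2 - 4 * t) = 1 := by
      linear_combination e₁ - e₃ + (-3 * (U₁ + U₃) + 4 * s) * h
    have := congrArg PowerSeries.constantCoeff this
    simp [hcc] at this
  have n₂₃ : U₂ - U₃ ≠ 0 := by
    intro h
    have : 4 * t * (-2 - 4 * t) = 1 := by
      linear_combination e₂ - e₃ + (-3 * (U₂ + U₃) + 4 * s) * h
    have := congrArg PowerSeries.constantCoeff this
    simp [hcc] at this
  have q₁₂ : U₁ ^ 2 + U₁ * U₂ + U₂ ^ 2 - s * (U₁ + U₂) = 0 := by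
    refine mul_left_cancel₀ n₁₂ ?_
    linear_combination f₁ - f₂
  have q₁₃ : U₁ ^ 2 + U₁ * U₃ + U₃ ^ 2 - s * (U₁ + U₃) = 0 := by
    refine mul_left_cancel₀ n₁₃ ?_
    linear_combination f₁ - f₃
  have hsum : s = U₁ + U₂ + U₃ := by
    refine mul_left_cancel₀ n₂₃ ?_
    linear_combination q₁₃ - q₁₂
  refine ⟨U₁, U₂, U₃, s, p, κ, hs, hp, hκ, hsum, f₁, f₂, f₃, ?_, e₁, e₂, e₃⟩
  linear_combination (-U₁ - U₂) * hsum - q₁₂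

/-! ### Algebraicity of the parameters -/

/-- The relation between the sum `s`, the product `p` of the roots of `U³ - s U² - p` and
the prescribed values `e_k = -3 U_k² + 4 s U_k + κ`, obtained from the power sums of the roots by
eliminating `κ`. -/
lemma cubic_resolvent {S : Type*} [CommRing S] {U₁ U₂ U₃ s p κ e₁ e₂ e₃ Q B : S}
    (hs : s = U₁ + U₂ + U₃)
    (f₁ : U₁ ^ 3 = s * U₁ ^ 2 + p) (f₂ : U₂ ^ 3 = s * U₂ ^ 2 + p) (f₃ : U₃ ^ 3 = s * U₃ ^ 2 + p)
    (h2 : U₁ * U₂ + U₁ * U₃ + U₂ * U₃ = 0)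
    (h₁ : e₁ = -3 * U₁ ^ 2 + 4 * s * U₁ + κ) (h₂ : e₂ = -3 * U₂ ^ 2 + 4 * s * U₂ + κ)
    (h₃ : e₃ = -3 * U₃ ^ 2 + 4 * s * U₃ + κ)
    (hQ : Q = (2 * e₁ - e₂ - e₃) ^ 2 + (2 * e₂ - e₁ - e₃) ^ 2 + (2 * e₃ - e₁ - e₂) ^ 2)
    (hB : B = (2 * e₁ - e₂ - e₃) ^ 3 + (2 * e₂ - e₁ - e₃) ^ 3 + (2 * e₃ - e₁ - e₂) ^ 3) :
    e₁ + e₂ + e₃ = s ^ 2 + 3 * κ ∧ 324 * (s * p) = 6 * s ^ 4 - Q ∧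
      2187 * (972 * s ^ 8 - 108 * Q * s ^ 4 - 48 * B * s ^ 2 - Q ^ 2) = 0 := by
  have s2 : U₁ ^ 2 + U₂ ^ 2 + U₃ ^ 2 = s ^ 2 := by rw [hs]; linear_combination -2 * h2
  have s3 : U₁ ^ 3 + U₂ ^ 3 + U₃ ^ 3 = s ^ 3 + 3 * p := by
    linear_combination f₁ + f₂ + f₃ + s * s2
  have s4 : U₁ ^ 4 + U₂ ^ 4 + U₃ ^ 4 = s ^ 4 + 4 * s * p := by
    linear_combination U₁ * f₁ + U₂ * f₂ + U₃ * f₃ + s * s3 - p * hs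
  have s5 : U₁ ^ 5 + U₂ ^ 5 + U₃ ^ 5 = s ^ 5 + 5 * s ^ 2 * p := by
    linear_combination U₁ ^ 2 * f₁ + U₂ ^ 2 * f₂ + U₃ ^ 2 * f₃ + s * s4 + p * s2
  have s6 : U₁ ^ 6 + U₂ ^ 6 + U₃ ^ 6 = s ^ 6 + 6 * s ^ 3 * p + 3 * p ^ 2 := by
    linear_combination U₁ ^ 3 * f₁ + U₂ ^ 3 * f₂ + U₃ ^ 3 * f₃ + s * s5 + p * s3
  have d₁ : 2 * e₁ - e₂ - e₃ = -9 * U₁ ^ 2 + 12 * s * U₁ - s ^ 2 := by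
    rw [h₁, h₂, h₃]
    linear_combination 3 * s2 + 4 * s * hs
  have d₂ : 2 * e₂ - e₁ - e₃ = -9 * U₂ ^ 2 + 12 * s * U₂ - s ^ 2 := by
    rw [h₁, h₂, h₃]
    linear_combination 3 * s2 + 4 * s * hs
  have d₃ : 2 * e₃ - e₁ - e₂ = -9 * U₃ ^ 2 + 12 * s * U₃ - s ^ 2 := by
    rw [h₁, h₂, h₃]
    linear_combination 3 * s2 + 4 * s * hs
  have hQ' : Q = 6 * s ^ 4 - 324 * (s * p) := by
    rw [hQ, d₁, d₂, d₃]
    linear_combination 81 * s4 - 216 * s * s3 + 162 * s ^ 2 * s2 + 24 * s ^ 3 * hs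
  have hB' : B = 6 * s ^ 6 + 810 * s ^ 3 * p - 2187 * p ^ 2 := by
    rw [hB, d₁, d₂, d₃]
    linear_combination -729 * s6 + 2916 * s * s5 - 4131 * s ^ 2 * s4 + 2376 * s ^ 3 * s3
      - 459 * s ^ 4 * s2 - 36 * s ^ 5 * hs
  refine ⟨?_, ?_, ?_⟩
  · rw [h₁, h₂, h₃]
    linear_combination -3 * s2 - 4 * s * hs
  · linear_combination hQ'
  · rw [hQ', hB']
    ring

/-- The power series that are algebraic over `ℚ[t]`. -/
def algSeries : Subalgebra (Polynomial ℚ) (PowerSeries ℚ) :=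
  Subalgebra.algebraicClosure (Polynomial ℚ) (PowerSeries ℚ)

lemma X_mem_algSeries : PowerSeries.X ∈ algSeries := by
  have := algSeries.algebraMap_mem Polynomial.X
  simpa [PowerSeries.algebraMap_apply'] using this

lemma algSeries_of_mul {m f : PowerSeries ℚ} (hm0 : m ≠ 0) (hm : m ∈ algSeries)
    (h : m * f ∈ algSeries) : f ∈ algSeries :=
  IsAlgebraic.of_mul (mem_nonZeroDivisors_of_ne_zero hm0) hm h

lemma algSeries_of_ofNat_mul (m : ℕ) [m.AtLeastTwo] {f : PowerSeries ℚ}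
    (h : (OfNat.ofNat m : PowerSeries ℚ) * f ∈ algSeries) : f ∈ algSeries :=
  algSeries_of_mul (OfNat.ofNat_ne_zero m) (ofNat_mem _ m) h

set_option maxHeartbeats 1000000 in
/-- The parameters of the two cubic equations are algebraic: `cubic_resolvent` is a nonzero polynomial
equation for `s = 1 - 2tc` over `ℚ[t]`, and the remaining quantities are rational in `s` and `t`. -/
lemma params_mem_algSeries :
    cParam ∈ algSeries ∧ gammaParam ∈ algSeries ∧ deltaParam ∈ algSeries := by
  obtain ⟨U₁, U₂, U₃, s, p, κ, hs, hp, hκ, hsum, f₁, f₂, f₃, h2, e₁, e₂, e₃⟩ := double_roots_vieta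
  obtain ⟨hE, hsp, hres⟩ := cubic_resolvent hsum f₁ f₂ f₃ h2 e₁ e₂ e₃ rfl rfl
  have hXm := X_mem_algSeries
  have hX0 : (PowerSeries.X : PowerSeries ℚ) ≠ 0 := PowerSeries.X_ne_zero
  have hs0 : s ≠ 0 := by
    intro h
    have := congrArg PowerSeries.constantCoeff (hs.symm.trans h)
    simp at this
  -- the resolvent is a nonzero polynomial equation for `s`
  have hsm : s ∈ algSeries := by
    obtain ⟨Q, hQ⟩ : ∃ Q : Polynomial ℚ, Q
      = (2 * (4 * Polynomial.X * (2 - 4 * Polynomial.X))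
          - (4 * Polynomial.X * (-2 - 4 * Polynomial.X)) - 1) ^ 2
        + (2 * (4 * Polynomial.X * (-2 - 4 * Polynomial.X))
          - (4 * Polynomial.X * (2 - 4 * Polynomial.X)) - 1) ^ 2
        + (2 * 1 - (4 * Polynomial.X * (2 - 4 * Polynomial.X))
          - (4 * Polynomial.X * (-2 - 4 * Polynomial.X))) ^ 2 := ⟨_, rfl⟩
    obtain ⟨B, hB⟩ : ∃ B : Polynomial ℚ, B
      = (2 * (4 * Polynomial.X * (2 - 4 * Polynomial.X))
          - (4 * Polynomial.X * (-2 - 4 * Polynomial.X)) - 1) ^ 3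
        + (2 * (4 * Polynomial.X * (-2 - 4 * Polynomial.X))
          - (4 * Polynomial.X * (2 - 4 * Polynomial.X)) - 1) ^ 3
        + (2 * 1 - (4 * Polynomial.X * (2 - 4 * Polynomial.X))
          - (4 * Polynomial.X * (-2 - 4 * Polynomial.X))) ^ 3 := ⟨_, rfl⟩
    have hX' : algebraMap (Polynomial ℚ) (PowerSeries ℚ) Polynomial.X = PowerSeries.X := by
      simp [PowerSeries.algebraMap_apply']
    have hQ' := congrArg (algebraMap (Polynomial ℚ) (PowerSeries ℚ)) hQ
    have hB' := congrArg (algebraMap (Polynomial ℚ) (PowerSeries ℚ)) hB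
    simp only [map_add, map_sub, map_mul, map_pow, map_ofNat, map_one, map_neg, hX'] at hQ' hB'
    refine ⟨972 * Polynomial.X ^ 8 - Polynomial.C (108 * Q) * Polynomial.X ^ 4
      - Polynomial.C (48 * B) * Polynomial.X ^ 2 - Polynomial.C (Q ^ 2), ?_, ?_⟩
    · intro h0
      have h8 := congrArg (fun P => Polynomial.coeff P 8) h0
      simp only [Polynomial.coeff_sub, Polynomial.coeff_ofNat_mul, Polynomial.coeff_C_mul,
        Polynomial.coeff_X_pow, Polynomial.coeff_C, Polynomial.coeff_zero] at h8
      norm_num at h8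
    · simp only [map_sub, map_mul, map_pow, map_ofNat, Polynomial.aeval_X, Polynomial.aeval_C,
        hQ', hB']
      refine (mul_eq_zero.mp hres).resolve_left ?_
      norm_num
  have hpm : p ∈ algSeries := by
    refine algSeries_of_mul hs0 hsm (algSeries_of_ofNat_mul 324 ?_)
    rw [hsp]
    repeat' first | with_reducible assumption | apply add_mem | apply sub_mem |
      apply mul_mem | apply pow_mem |
      apply neg_mem | exact one_mem _ | exact ofNat_mem _ _
  have hκm : κ ∈ algSeries := by
    refine algSeries_of_ofNat_mul 3 ?_
    rw [← sub_eq_of_eq_add' hE]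
    repeat' first | with_reducible assumption | apply add_mem | apply sub_mem |
      apply mul_mem | apply pow_mem |
      apply neg_mem | exact one_mem _ | exact ofNat_mem _ _
  have hcm : cParam ∈ algSeries := by
    refine algSeries_of_mul hX0 hXm (algSeries_of_ofNat_mul 2 ?_)
    rw [show 2 * (PowerSeries.X * cParam) = 1 - s by linear_combination hs]
    exact sub_mem (one_mem _) hsm
  have hγm : gammaParam ∈ algSeries := by
    refine algSeries_of_mul hX0 hXm (algSeries_of_ofNat_mul 4 ?_)
    rw [show 4 * (PowerSeries.X * gammaParam) = κ - 8 * PowerSeries.X * cParam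
      + 4 * PowerSeries.X ^ 2 * cParam ^ 2 by linear_combination -hκ]
    repeat' first | with_reducible assumption | apply add_mem | apply sub_mem |
      apply mul_mem | apply pow_mem |
      apply neg_mem | exact one_mem _ | exact ofNat_mem _ _
  refine ⟨hcm, hγm, ?_⟩
  refine algSeries_of_mul (pow_ne_zero 2 hX0) (pow_mem hXm 2) (algSeries_of_ofNat_mul 4 ?_)
  rw [show 4 * (PowerSeries.X ^ 2 * deltaParam) = -p
    - 4 * PowerSeries.X ^ 2 * (cParam ^ 2 + gammaParam * cParam) by linear_combination hp]
  repeat' first | with_reducible assumption | apply add_mem | apply sub_mem |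
      apply mul_mem | apply pow_mem |
    apply neg_mem | exact one_mem _ | exact ofNat_mem _ _

/-! ### Algebraicity of all endpoint series -/

/-- The coefficient of `xⁱ` in an element of `ℚ[x]⟦t⟧`, as a power series in `t`. -/
def xCoeff (i : ℕ) (f : PowerSeries (Polynomial ℚ)) : PowerSeries ℚ :=
  PowerSeries.mk fun n => (PowerSeries.coeff n f).coeff i

lemma xCoeff_mul (i : ℕ) (f h : PowerSeries (Polynomial ℚ)) :
    xCoeff i (f * h) = ∑ p ∈ Finset.HasAntidiagonal.antidiagonal i, xCoeff p.1 f * xCoeff p.2 h := by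
  ext n
  simp only [xCoeff, PowerSeries.coeff_mk, PowerSeries.coeff_mul, Polynomial.finsetSum_coeff,
    Polynomial.coeff_mul, map_sum]
  rw [Finset.sum_comm]

lemma xCoeff_constEmb (i : ℕ) (u : PowerSeries ℚ) :
    xCoeff i (constEmb u) = if i = 0 then u else 0 := by
  ext n
  split_ifs with h <;> simp [xCoeff, constEmb, Polynomial.coeff_C, h]

lemma xCoeff_X_mul_succ (i : ℕ) (f : PowerSeries (Polynomial ℚ)) :
    xCoeff (i + 1) (PowerSeries.C Polynomial.X * f) = xCoeff i f := by
  ext n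
  simp [xCoeff]

lemma xCoeff_X_mul_zero (f : PowerSeries (Polynomial ℚ)) :
    xCoeff 0 (PowerSeries.C Polynomial.X * f) = 0 := by
  ext n
  simp [xCoeff]

/-- The subring of `ℚ[x]⟦t⟧` of the elements whose coefficients of `1, x, …, x^(k-1)` are algebraic
over `ℚ[t]`. -/
def algUpTo (k : ℕ) : Subring (PowerSeries (Polynomial ℚ)) where
  carrier := {f | ∀ i < k, xCoeff i f ∈ algSeries}
  mul_mem' := by
    intro f h hf hh i hi
    rw [xCoeff_mul]
    refine sum_mem fun p hp => ?_
    have := Finset.HasAntidiagonal.mem_antidiagonal.mp hp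
    exact mul_mem (hf _ (by omega)) (hh _ (by omega))
  one_mem' := by
    intro i _
    rw [← map_one constEmb, xCoeff_constEmb]
    split_ifs
    exacts [one_mem _, zero_mem _]
  add_mem' := by
    intro f h hf hh i hi
    have : xCoeff i (f + h) = xCoeff i f + xCoeff i h := by
      ext n
      simp [xCoeff]
    rw [this]
    exact add_mem (hf i hi) (hh i hi)
  zero_mem' := by
    intro i _
    rw [← map_zero constEmb, xCoeff_constEmb, ite_self]
    exact zero_mem _
  neg_mem' := by
    intro f hf i hi
    have : xCoeff i (-f) = -xCoeff i f := by
      ext n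
      simp [xCoeff]
    rw [this]
    exact neg_mem (hf i hi)

lemma mem_algUpTo {k : ℕ} {f : PowerSeries (Polynomial ℚ)} :
    f ∈ algUpTo k ↔ ∀ i < k, xCoeff i f ∈ algSeries := Iff.rfl

lemma constEmb_mem_algUpTo (k : ℕ) {u : PowerSeries ℚ} (hu : u ∈ algSeries) :
    constEmb u ∈ algUpTo k := by
  intro i _
  rw [xCoeff_constEmb]
  split_ifs
  exacts [hu, zero_mem _]

lemma X_mul_mem_algUpTo {k : ℕ} {f : PowerSeries (Polynomial ℚ)} (hf : f ∈ algUpTo k) :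
    PowerSeries.C Polynomial.X * f ∈ algUpTo (k + 1) := by
  rintro (_ | i) hi
  · rw [xCoeff_X_mul_zero]
    exact zero_mem _
  · rw [xCoeff_X_mul_succ]
    exact hf i (by omega)

lemma C_X_mem_algUpTo (k : ℕ) : PowerSeries.C Polynomial.X ∈ algUpTo k := by
  have h := X_mul_mem_algUpTo (one_mem (algUpTo k))
  rw [mul_one] at h
  exact fun i hi => h i (by omega)

lemma X_mem_algUpTo (k : ℕ) : PowerSeries.X ∈ algUpTo k := by
  have h : constEmb PowerSeries.X = PowerSeries.X := PowerSeries.map_X _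
  exact h ▸ constEmb_mem_algUpTo k X_mem_algSeries

/-- A fixed-point principle: if the coefficients of `tᵐ f` up to `xᵏ` are algebraic as soon as those
of `f` up to `x^(k-1)` are, then all coefficients of `f` are algebraic. -/
lemma algUpTo_induction {f : PowerSeries (Polynomial ℚ)} (m : ℕ)
    (h : ∀ k, f ∈ algUpTo k → PowerSeries.X ^ m * f ∈ algUpTo (k + 1)) (k : ℕ) :
    f ∈ algUpTo k := by
  induction k with
  | zero => exact fun i hi => absurd hi (Nat.not_lt_zero i)
  | succ k ih =>
    intro i hi
    refine algSeries_of_mul (pow_ne_zero m PowerSeries.X_ne_zero) (pow_mem X_mem_algSeries m) ?_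
    have hX : constEmb PowerSeries.X = PowerSeries.X := PowerSeries.map_X _
    have := h k ih i hi
    rw [← hX, ← map_pow, xCoeff_mul, Finset.sum_eq_single (0, i)] at this
    · rwa [xCoeff_constEmb, if_pos rfl] at this
    · rintro ⟨a, b⟩ hab hne
      have := Finset.HasAntidiagonal.mem_antidiagonal.mp hab
      have ha : a ≠ 0 := by
        rintro rfl
        simp only [zero_add] at this
        simp [this] at hne
      dsimp only
      rw [xCoeff_constEmb, if_neg ha, zero_mul]
    · simp

/-- Solving `cubicX = 0` for `2t² R`, where `V = 1 + t x² R`, in terms of `M = x R`. -/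
lemma cubicX_solve {S : Type*} [CommRing S] [IsDomain S] (A : Subring S) {t c γ δ x R M : S}
    (hx : x ≠ 0) (hM : M = x * R) (h : cubicX t c γ δ x (1 + t * x ^ 2 * R) = 0)
    (htm : t ∈ A) (hcm : c ∈ A) (hγm : γ ∈ A) (hδm : δ ∈ A) (hxm : x ∈ A) (hMm : M ∈ A) :
    2 * (t ^ 2 * R) ∈ A := by
  have hR : 2 * (t ^ 2 * R) = -((-2 * t + x - t * x ^ 2)
      + (1 - 2 * t * x + x ^ 2 - t * x ^ 3) * (t * M - c)
      + t * (3 * t ^ 2 * M ^ 2 + x * t ^ 3 * M ^ 3)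
      - (1 + t * c) * (2 * t * M + t ^ 2 * x * M ^ 2)
      - γ * (1 + t * x * M) - δ * x) := by
    refine mul_left_cancel₀ (pow_ne_zero 2 hx) ?_
    unfold cubicX at h
    rw [hM]
    linear_combination h
  rw [hR]
  repeat' first | assumption | apply neg_mem | apply add_mem | apply sub_mem |
    apply mul_mem | apply pow_mem | exact one_mem _ | exact ofNat_mem _ _

/-- The series `Q(x,0)` has coefficients algebraic over `ℚ[t]`, by its cubic equation. -/
lemma rowTail_mem_algUpTo (k : ℕ) : rowTail 1 ∈ algUpTo k := by
  refine algUpTo_induction 2 (fun k hk => ?_) k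
  have hX0 : (PowerSeries.C Polynomial.X : PowerSeries (Polynomial ℚ)) ≠ 0 :=
    (map_ne_zero_iff _ PowerSeries.C_injective).mpr Polynomial.X_ne_zero
  have h7 : 2 * (PowerSeries.X ^ 2 * rowTail 1) ∈ algUpTo (k + 1) :=
    cubicX_solve _ hX0 rfl cubic_equations.1 (X_mem_algUpTo _)
      (constEmb_mem_algUpTo _ params_mem_algSeries.1)
      (constEmb_mem_algUpTo _ params_mem_algSeries.2.1)
      (constEmb_mem_algUpTo _ params_mem_algSeries.2.2) (C_X_mem_algUpTo _) (X_mul_mem_algUpTo hk)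
  -- division by `2`
  have h8 : constEmb (PowerSeries.C (1 / 2 : ℚ)) ∈ algUpTo (k + 1) := by
    refine constEmb_mem_algUpTo _ (algSeries_of_ofNat_mul 2 ?_)
    convert one_mem algSeries
    rw [← map_ofNat (PowerSeries.C (R := ℚ)) 2, ← map_mul]
    norm_num
  have h9 : constEmb (PowerSeries.C (1 / 2 : ℚ)) * 2 = 1 := by
    rw [← map_ofNat constEmb 2, ← map_mul, ← map_ofNat (PowerSeries.C (R := ℚ)) 2, ← map_mul]
    norm_num
  have h10 := mul_mem h8 h7
  rwa [← mul_assoc, h9, one_mul] at h10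

/-- Solving `cubicY = 0` for `t² W₁`, where `W = t (1 + y) c + M` and `M = y W₁`. -/
lemma cubicY_solve {S : Type*} [CommRing S] (A : Subring S) {t c γ δ y W W₁ M : S}
    (hM : M = y * W₁) (hW : y * W₁ = W - t * (1 + y) * c) (h : cubicY t c γ δ y W W₁ = 0)
    (htm : t ∈ A) (hcm : c ∈ A) (hγm : γ ∈ A) (hδm : δ ∈ A) (hym : y ∈ A) (hMm : M ∈ A) :
    t ^ 2 * W₁ ∈ A := by
  have hR : t ^ 2 * W₁ = -((t ^ 2 * (4 + 6 * y + 4 * y ^ 2 + y ^ 3) + y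
        - 4 * t ^ 2 * (1 + y) ^ 2) * M + (M + t * (1 + y) * c) ^ 3
      - (1 + t * c) * (1 + y) * (M + t * (1 + y) * c) ^ 2
      - γ * t * (1 + y) ^ 2 * (M + t * (1 + y) * c) - δ * t ^ 2 * (1 + y) ^ 3) := by
    obtain rfl : W = y * W₁ + t * (1 + y) * c := by linear_combination -hW
    unfold cubicY at h
    rw [hM]
    linear_combination h
  rw [hR]
  repeat' first | assumption | apply neg_mem | apply add_mem | apply sub_mem |
    apply mul_mem | apply pow_mem | exact one_mem _ | exact ofNat_mem _ _

/-- The series `W₁`, equivalent to `Q(0,y)`, has coefficients algebraic over `ℚ[t]`, by its cubic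
equation. -/
lemma colInvTail_mem_algUpTo (k : ℕ) : colInvTail ∈ algUpTo k :=
  algUpTo_induction 2 (fun _ hk => cubicY_solve _ rfl X_mul_colInvTail cubic_equations.2
    (X_mem_algUpTo _) (constEmb_mem_algUpTo _ params_mem_algSeries.1)
    (constEmb_mem_algUpTo _ params_mem_algSeries.2.1)
    (constEmb_mem_algUpTo _ params_mem_algSeries.2.2) (C_X_mem_algUpTo _)
    (X_mul_mem_algUpTo hk)) k

lemma endSeries_zero_zero_mem : endSeries 0 0 ∈ algSeries := by
  refine algSeries_of_mul PowerSeries.X_ne_zero X_mem_algSeries ?_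
  have := neg_mem params_mem_algSeries.1
  rwa [cParam, neg_neg] at this

lemma colTail_mem_algUpTo (k : ℕ) : colTail 1 ∈ algUpTo k := by
  refine algUpTo_induction 2 (fun k hk => ?_) k
  have h1 := X_mul_mem_algUpTo hk
  have h2 := constEmb_mem_algUpTo (k + 1) endSeries_zero_zero_mem
  have h3 := colInvTail_mem_algUpTo (k + 1)
  have h5 := C_X_mem_algUpTo (k + 1)
  have h6 := X_mem_algUpTo (k + 1)
  have h : PowerSeries.X ^ 2 * colTail 1 = 1
      - PowerSeries.X ^ 2 * (1 + PowerSeries.C Polynomial.X) * constEmb (endSeries 0 0)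
      - colInvTail - PowerSeries.X ^ 2 * (2 + PowerSeries.C Polynomial.X)
        * (PowerSeries.C Polynomial.X * colTail 1) := by
    rw [colInvTail]
    ring
  rw [h]
  exact sub_mem (sub_mem (sub_mem (one_mem _) (mul_mem (mul_mem (pow_mem h6 2)
    (add_mem (one_mem _) h5)) h2)) h3)
    (mul_mem (mul_mem (pow_mem h6 2) (add_mem (ofNat_mem _ 2) h5)) h1)

lemma endSeries_row_mem (i : ℕ) : endSeries i 0 ∈ algSeries := by
  rcases i with _ | i
  · exact endSeries_zero_zero_mem
  · have h := rowTail_mem_algUpTo (i + 1) i (Nat.lt_succ_self i)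
    have h' : xCoeff i (rowTail 1) = endSeries (i + 1) 0 := by
      ext n
      simp [xCoeff, coeff_rowTail, endSeries]
    rwa [h'] at h

lemma endSeries_col_mem (j : ℕ) : endSeries 0 j ∈ algSeries := by
  rcases j with _ | j
  · exact endSeries_zero_zero_mem
  · have h := colTail_mem_algUpTo (j + 1) j (Nat.lt_succ_self j)
    have h' : xCoeff j (colTail 1) = endSeries 0 (j + 1) := by
      ext n
      simp [xCoeff, coeff_colTail, endSeries]
    rwa [h'] at h

/-- `∑ₙ g(n;i,j) tⁿ` for an arbitrary point `(i,j)` of `ℤ²`. -/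
def ptSeries (i j : ℤ) : PowerSeries ℚ := PowerSeries.mk fun n => (g n i j : ℚ)

lemma ptSeries_of_neg {i j : ℤ} (h : i < 0 ∨ j < 0) : ptSeries i j = 0 := by
  ext n
  simp [ptSeries, g_of_neg h]

lemma ptSeries_rec {i j : ℤ} (hi : 0 ≤ i) (hj : 0 ≤ j) :
    PowerSeries.X * ptSeries (i + 1) (j + 1) = ptSeries i j - (if i = 0 ∧ j = 0 then 1 else 0)
      - PowerSeries.X * (ptSeries (i - 1) j + ptSeries (i + 1) j + ptSeries (i - 1) (j - 1)) := by
  ext n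
  rcases n with _ | n
  · split_ifs with h <;> simp [ptSeries, g_zero, h]
  · have h0 : PowerSeries.coeff (n + 1) (if i = 0 ∧ j = 0 then (1 : PowerSeries ℚ) else 0) = 0 := by
      split_ifs <;> simp [PowerSeries.coeff_one]
    rw [map_sub, map_sub, h0, PowerSeries.coeff_succ_X_mul, PowerSeries.coeff_succ_X_mul]
    simp only [ptSeries, map_add, PowerSeries.coeff_mk]
    rw [g_succ n hi hj]
    push_cast
    ring

/-- Algebraicity spreads from the two axes to the whole quadrant: the step recurrence expresses
the series of `(i+1,j+1)` by series of lower rows. -/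
lemma ptSeries_mem (i j : ℤ) : ptSeries i j ∈ algSeries := by
  suffices h : ∀ k : ℕ, ∀ j : ℤ, j ≤ k → ∀ i, ptSeries i j ∈ algSeries from
    h j.toNat j (Int.self_le_toNat j) i
  intro k
  have base : ∀ i j : ℤ, i ≤ 0 ∨ j ≤ 0 → ptSeries i j ∈ algSeries := by
    intro i j hij
    by_cases hn : i < 0 ∨ j < 0
    · rw [ptSeries_of_neg hn]
      exact zero_mem _
    · obtain ⟨i, rfl⟩ := Int.eq_ofNat_of_zero_le (show 0 ≤ i by omega)
      obtain ⟨j, rfl⟩ := Int.eq_ofNat_of_zero_le (show 0 ≤ j by omega)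
      rcases hij with h | h
      · obtain rfl : i = 0 := by omega
        exact endSeries_col_mem j
      · obtain rfl : j = 0 := by omega
        exact endSeries_row_mem i
  induction k with
  | zero => exact fun j hj i => base i j (Or.inr (by simpa using hj))
  | succ k ih =>
    intro j hj i
    by_cases h : i ≤ 0 ∨ j ≤ 0
    · exact base i j h
    · push Not at h
      refine algSeries_of_mul PowerSeries.X_ne_zero X_mem_algSeries ?_
      have hrec := ptSeries_rec (show 0 ≤ i - 1 by omega) (show 0 ≤ j - 1 by omega)
      rw [sub_add_cancel, sub_add_cancel] at hrec
      rw [hrec]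
      push_cast at hj
      refine sub_mem (sub_mem (ih _ (by omega) _) ?_) (mul_mem X_mem_algSeries
        (add_mem (add_mem (ih _ (by omega) _) (ih _ (by omega) _)) (ih _ (by omega) _)))
      split_ifs
      exacts [one_mem _, zero_mem _]

/-! ### Algebraic series have P-recursive coefficients -/

/-- The chain rule for a polynomial relation: `D (P(u)) = Q(u) + P'(u) · D u`, where `Q` arises from
`P` by differentiating its coefficients. -/
lemma exists_derivation_aeval {R A B : Type*} [CommRing R] [CommRing A] [CommRing B]
    [Algebra R B] [Algebra A B]
    (D : Derivation R B B) (hD : ∀ a : A, ∃ b : A, D (algebraMap A B a) = algebraMap A B b)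
    (u : B) (P : Polynomial A) :
    ∃ Q : Polynomial A, D (Polynomial.aeval u P) =
      Polynomial.aeval u Q + Polynomial.aeval u (Polynomial.derivative P) * D u := by
  induction P using Polynomial.induction_on' with
  | add p q hp hq =>
    obtain ⟨P, hP⟩ := hp
    obtain ⟨Q, hQ⟩ := hq
    refine ⟨P + Q, ?_⟩
    simp only [map_add, hP, hQ]
    ring
  | monomial n a =>
    obtain ⟨b, hb⟩ := hD a
    refine ⟨Polynomial.monomial n b, ?_⟩
    simp only [Polynomial.aeval_monomial, Polynomial.derivative_monomial, Derivation.leibniz,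
      Derivation.leibniz_pow, hb, smul_eq_mul, nsmul_eq_mul, map_mul, map_natCast]
    ring

/-- An element algebraic over `A` satisfies a polynomial relation whose formal derivative does not
vanish at it: one of minimal degree. -/
lemma exists_separable_relation {A B : Type*} [CommRing A] [IsDomain A] [CharZero A] [CommRing B]
    [Algebra A B] [FaithfulSMul A B] {u : B} (hu : IsAlgebraic A u) :
    ∃ P : Polynomial A, Polynomial.aeval u P = 0 ∧
      Polynomial.aeval u (Polynomial.derivative P) ≠ 0 := by
  classical
  have hex : ∃ n, ∃ P : Polynomial A, P ≠ 0 ∧ Polynomial.aeval u P = 0 ∧ P.natDegree = n := by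
    obtain ⟨P, h0, h1⟩ := hu
    exact ⟨_, P, h0, h1, rfl⟩
  obtain ⟨P, h0, h1, h2⟩ := Nat.find_spec hex
  have hdeg : P.natDegree ≠ 0 := by
    intro hz
    rw [Polynomial.eq_C_of_natDegree_eq_zero hz] at h0 h1
    rw [Polynomial.aeval_C, FaithfulSMul.algebraMap_eq_zero_iff] at h1
    simp [h1] at h0
  refine ⟨P, h1, fun hd => ?_⟩
  have hlt := Polynomial.natDegree_derivative_lt hdeg
  refine Nat.find_min hex (m := (Polynomial.derivative P).natDegree) (by omega)
    ⟨_, fun h => hdeg ?_, hd, rfl⟩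
  exact Polynomial.derivative_eq_zero.mp h

/-- The iterated derivatives of an algebraic element are linearly dependent: they all lie in the
finite extension of the fraction field generated by that element. -/
lemma exists_linear_relation {R A B : Type*} [CommRing R] [CommRing A] [IsDomain A] [CharZero A]
    [CommRing B] [IsDomain B] [Algebra R B] [Algebra A B] [FaithfulSMul A B]
    (D : Derivation R B B) (hD : ∀ a : A, ∃ b : A, D (algebraMap A B a) = algebraMap A B b)
    {f : B} (hf : IsAlgebraic A f) :
    ¬ LinearIndependent A (fun k : ℕ => D^[k] f) := by
  let K := FractionRing A
  let L := FractionRing B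
  have : FaithfulSMul A L := FaithfulSMul.trans A B L
  let _ : Algebra K L := FractionRing.liftAlgebra A L
  have : IsScalarTower A K L := FractionRing.isScalarTower_liftAlgebra A L
  have hinj : Function.Injective (algebraMap B L) := IsFractionRing.injective B L
  have hfK : IsIntegral K (algebraMap B L f) :=
    ((hf.algebraMap (A := L)).extendScalars (IsFractionRing.injective A K)).isIntegral
  let E := IntermediateField.adjoin K {algebraMap B L f}
  have : FiniteDimensional K E := IntermediateField.adjoin.finiteDimensional hfK
  have hstep : ∀ u : B, algebraMap B L u ∈ E → algebraMap B L (D u) ∈ E := by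
    intro u hu
    have hualg : IsAlgebraic A u := by
      have h1 : IsAlgebraic K (algebraMap B L u) := by
        have := Algebra.IsAlgebraic.isAlgebraic (R := K) (⟨_, hu⟩ : E)
        exact this.algebraMap (A := L)
      have h2 : IsAlgebraic A (algebraMap B L u) :=
        (IsFractionRing.isAlgebraic_iff A K L).mpr h1
      exact (isAlgebraic_algebraMap_iff hinj).mp h2
    have hmem : ∀ Q : Polynomial A, algebraMap B L (Polynomial.aeval u Q) ∈ E := by
      intro Q
      rw [← Polynomial.aeval_algebraMap_apply, ← Polynomial.aeval_map_algebraMap K]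
      have := Polynomial.aeval_algHom_apply E.val (⟨_, hu⟩ : E) (Q.map (algebraMap A K))
      change Polynomial.aeval (algebraMap B L u) _ = _ at this
      rw [this]
      exact Subtype.property _
    obtain ⟨P, hP, hP'⟩ := exists_separable_relation hualg
    obtain ⟨Q, hQ⟩ := exists_derivation_aeval D hD u P
    rw [hP, map_zero] at hQ
    have hne : algebraMap B L (Polynomial.aeval u (Polynomial.derivative P)) ≠ 0 :=
      fun h => hP' (hinj (by rw [h, map_zero]))
    have : algebraMap B L (D u) = -algebraMap B L (Polynomial.aeval u Q) /
        algebraMap B L (Polynomial.aeval u (Polynomial.derivative P)) := by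
      rw [eq_div_iff hne, ← map_neg, ← map_mul]
      congr 1
      linear_combination -hQ
    rw [this]
    exact div_mem (neg_mem (hmem _)) (hmem _)
  have hall : ∀ k : ℕ, algebraMap B L (D^[k] f) ∈ E := by
    intro k
    induction k with
    | zero => exact IntermediateField.mem_adjoin_simple_self K _
    | succ k ih =>
      rw [Function.iterate_succ_apply']
      exact hstep _ ih
  intro hli
  have h1 : LinearIndependent A (fun k : ℕ => algebraMap B L (D^[k] f)) :=
    hli.map_injOn (IsScalarTower.toAlgHom A B L).toLinearMap hinj.injOn
  have h2 : LinearIndependent K (fun k : ℕ => algebraMap B L (D^[k] f)) :=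
    (LinearIndependent.iff_fractionRing A K).mp h1
  have h3 : LinearIndependent K (fun k : ℕ => (⟨_, hall k⟩ : E)) :=
    LinearIndependent.of_comp E.val.toLinearMap h2
  exact not_finite_iff_infinite.mpr inferInstance h3.finite

/-- The Euler operator `t d/dt`, which multiplies the `n`-th coefficient by `n`. -/
def eulerOp : Derivation ℚ (PowerSeries ℚ) (PowerSeries ℚ) :=
  (PowerSeries.X : PowerSeries ℚ) • PowerSeries.derivative ℚ

lemma coeff_eulerOp_iterate (f : PowerSeries ℚ) (k n : ℕ) :
    PowerSeries.coeff n (eulerOp^[k] f) = (n : ℚ) ^ k * PowerSeries.coeff n f := by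
  induction k with
  | zero => simp
  | succ k ih =>
    have : ∀ h : PowerSeries ℚ, PowerSeries.coeff n (eulerOp h) = n * PowerSeries.coeff n h := by
      intro h
      change PowerSeries.coeff n (PowerSeries.X * PowerSeries.derivative ℚ h) = _
      cases n with
      | zero => simp
      | succ n =>
        rw [PowerSeries.coeff_succ_X_mul, PowerSeries.coeff_derivative]
        push_cast
        ring
    rw [Function.iterate_succ_apply', this, ih]
    ring

lemma eulerOp_coe (a : Polynomial ℚ) :
    ∃ b : Polynomial ℚ, eulerOp (algebraMap (Polynomial ℚ) (PowerSeries ℚ) a) =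
      algebraMap (Polynomial ℚ) (PowerSeries ℚ) b := by
  refine ⟨Polynomial.X * Polynomial.derivative a, ?_⟩
  change PowerSeries.X * PowerSeries.derivative ℚ (a : PowerSeries ℚ) =
    ((Polynomial.X * Polynomial.derivative a : Polynomial ℚ) : PowerSeries ℚ)
  rw [PowerSeries.derivative_coe, Polynomial.coe_mul, Polynomial.coe_X]

/-- A recurrence with some nonzero coefficient can be normalised so that its leading coefficient is
nonzero and its order positive. Shifting the index by one takes care of the latter. -/
lemma recurrence_normalise (u : ℕ → ℚ) (p : ℕ → Polynomial ℚ) (M : ℕ) (hp : ∃ l ≤ M, p l ≠ 0)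
    (h : ∀ n : ℕ, ∑ k ∈ Finset.range (M + 1), (p k).eval (n : ℚ) * u (n + k) = 0) :
    ∃ r : ℕ, 1 ≤ r ∧ ∃ p : ℕ → Polynomial ℚ, p r ≠ 0 ∧
      ∀ n : ℕ, ∑ k ∈ Finset.range (r + 1), (p k).eval (n : ℚ) * u (n + k) = 0 := by
  induction M with
  | zero =>
    obtain ⟨l, hl, hne⟩ := hp
    obtain rfl : l = 0 := by omega
    refine ⟨1, le_rfl, fun k => if k = 0 then 0 else (p 0).comp (Polynomial.X + 1), ?_, ?_⟩
    · simpa [Polynomial.comp_X_add_C_eq_zero_iff] using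
        fun hz => hne ((Polynomial.comp_X_add_C_eq_zero_iff (t := (1 : ℚ))).mp (by simpa using hz))
    · intro n
      have := h (n + 1)
      simpa [Finset.sum_range_succ] using this
  | succ M ih =>
    by_cases hM : p (M + 1) = 0
    · refine ih ?_ fun n => ?_
      · obtain ⟨l, hl, hne⟩ := hp
        refine ⟨l, ?_, hne⟩
        rcases Nat.lt_or_ge M l with hlt | hge
        · exact absurd (by rwa [show l = M + 1 by omega]) hne
        · exact hge
      · have := h n
        rwa [Finset.sum_range_succ, hM, Polynomial.eval_zero, zero_mul, add_zero] at this
    · exact ⟨M + 1, by omega, p, hM, h⟩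

/-- The coefficients of an algebraic power series form a P-finite sequence. -/
lemma pfinite_of_algebraic {f : PowerSeries ℚ} (hf : IsAlgebraic (Polynomial ℚ) f) :
    ∃ r : ℕ, 1 ≤ r ∧ ∃ p : ℕ → Polynomial ℚ, p r ≠ 0 ∧ ∀ n : ℕ,
      ∑ k ∈ Finset.range (r + 1), (p k).eval (n : ℚ) * PowerSeries.coeff (n + k) f = 0 := by
  have : FaithfulSMul (Polynomial ℚ) (PowerSeries ℚ) :=
    (faithfulSMul_iff_algebraMap_injective (Polynomial ℚ) (PowerSeries ℚ)).mpr
      fun _ _ h => Polynomial.coe_injective ℚ h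
  have hdep := exists_linear_relation eulerOp eulerOp_coe hf
  rw [not_linearIndependent_iff] at hdep
  obtain ⟨s, a, hsum, k₀, hk₀, hne⟩ := hdep
  set M := s.sup fun k => (a k).natDegree with hM
  -- `q m` collects the contributions of `X ^ m` in the coefficients `a k`.
  let q : ℕ → Polynomial ℚ := fun m => ∑ k ∈ s, Polynomial.monomial k ((a k).coeff m)
  have hq : ∀ m, M < m → q m = 0 := fun m hm => Finset.sum_eq_zero fun k hk => by
    rw [Polynomial.coeff_eq_zero_of_natDegree_lt, Polynomial.monomial_zero_right]
    exact lt_of_le_of_lt (Finset.le_sup (f := fun k => (a k).natDegree) hk) hm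
  have hqne : q (a k₀).natDegree ≠ 0 := by
    intro hz
    have := congrArg (fun p => Polynomial.coeff p k₀) hz
    simp only [q, Polynomial.finsetSum_coeff, Polynomial.coeff_monomial, Finset.sum_ite_eq', hk₀,
      if_true, Polynomial.coeff_zero, Polynomial.coeff_natDegree] at this
    exact hne (Polynomial.leadingCoeff_eq_zero.mp this)
  have hcoeff : ∀ N, ∑ x ∈ Finset.HasAntidiagonal.antidiagonal N,
      (q x.1).eval (x.2 : ℚ) * PowerSeries.coeff x.2 f = 0 := by
    intro N
    have h := congrArg (PowerSeries.coeff N) hsum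
    rw [map_sum, map_zero] at h
    rw [← h]
    simp only [q, Polynomial.eval_finsetSum, Polynomial.eval_monomial, Finset.sum_mul]
    rw [Finset.sum_comm]
    refine Finset.sum_congr rfl fun k _ => ?_
    rw [Algebra.smul_def, PowerSeries.coeff_mul]
    refine Finset.sum_congr rfl fun x _ => ?_
    rw [coeff_eulerOp_iterate, show PowerSeries.coeff x.1 (algebraMap (Polynomial ℚ)
      (PowerSeries ℚ) (a k)) = (a k).coeff x.1 from Polynomial.coeff_coe _ _]
    ring
  refine recurrence_normalise (fun n => PowerSeries.coeff n f)
    (fun l => (q (M - l)).comp (Polynomial.X + Polynomial.C (l : ℚ))) M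
    ⟨M - (a k₀).natDegree, Nat.sub_le _ _, ?_⟩ fun n => ?_
  · rw [Ne, Polynomial.comp_X_add_C_eq_zero_iff, Nat.sub_sub_self
      (Finset.le_sup (f := fun k => (a k).natDegree) hk₀)]
    exact hqne
  · rw [← hcoeff (M + n), Finset.Nat.sum_antidiagonal_eq_sum_range_succ_mk,
      show (M + n).succ = (M + 1) + n by omega, Finset.sum_range_add _ (M + 1) n,
      ← Finset.sum_range_reflect _ (M + 1)]
    rw [Finset.sum_eq_zero (s := Finset.range n), add_zero]
    · refine Finset.sum_congr rfl fun l hl => ?_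
      have := Finset.mem_range.mp hl
      rw [show M + 1 - 1 - l = M - l by omega, show M - (M - l) = l by omega]
      dsimp only
      rw [show M + n - l = n + (M - l) by omega]
      simp
    · intro m _
      rw [hq _ (by omega), Polynomial.eval_zero, zero_mul]

/-- For every fixed endpoint `(i,j) ∈ ℕ²`, the sequence `n ↦ g(n;i,j)` is
P-finite: it satisfies a nontrivial linear recurrence with polynomial
coefficients. -/
theorem gessel_fixed_endpoint_pfinite (i j : ℕ) :
    ∃ r : ℕ, 1 ≤ r ∧ ∃ p : ℕ → Polynomial ℚ, p r ≠ 0 ∧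
      ∀ n : ℕ, ∑ k ∈ Finset.range (r + 1), (p k).eval (n : ℚ) * (g (n + k) i j : ℚ) = 0 := by
  simpa only [ptSeries, PowerSeries.coeff_mk] using pfinite_of_algebraic (ptSeries_mem i j)
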